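/- Let φ : ℝ × ℝ^d → ℝ be smooth and compactly supported. Then for every s ∈ ℝ and x ∈ ℝ^d, ∫_s^∞ ∫_{ℝ^d} p_{u−s}(z − x) · (∂_u φ(u, z) + Δ_z^{α/2} φ(u, z)) dz du = −φ(s, x), where Δ_z^{α/2} φ(u, z) = lim_{ε → 0⁺} ∫_{|y| > ε} (φ(u, z + y) − φ(u, z)) ν(y) dy is the fractional Laplacian acting in the space variable, and the iterated integral converges absolutely. -/

import Mathlib

open MeasureTheory Real Filter
open scoped RealInnerProductSpace Topology

/-!
Scaling turns `u ↦ ∫ p_u(z) φ(u, z) dz` into `G(u) = ∫ p_1(w) φ(u, u^{1/α} w) dw`, which is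
continuous on `[0, ∞)`, equals `φ(0, 0)` at `0` and vanishes for large `u`. Parseval and the fact
that `Δ^{α/2}` has Fourier symbol `-|ξ|^α` give `G'(u) = ∫ p_u (∂_u φ + Δ^{α/2} φ)(u, ·)` for
`u > 0`, so the claim at the origin is the fundamental theorem of calculus for `G`; translation
gives every other base point. Absolute convergence comes from `p_t` being a probability density:
`e^{-t|ξ|^α}` is a limit of characteristic functions of compound Poisson laws, hence has nonnegative
transform, and a nonnegative transform of a continuous function is integrable by Gaussian summation.
The symbol is computed by writing `|y|^{-d-α}` as a mixture of Gaussians.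
-/

section

open Module

variable {V : Type*} [NormedAddCommGroup V] [InnerProductSpace ℝ V] [MeasurableSpace V]
  [BorelSpace V] [FiniteDimensional ℝ V]

section CosineTransform

/-- The cosine transform `x ↦ ∫ f(ξ) cos⟨x, ξ⟩ dξ`, the real part of the Fourier transform of `f`
in the normalisation `e^{i⟨x, ξ⟩}`. -/
noncomputable def cosTransform (f : V → ℝ) (x : V) : ℝ :=
  ∫ ξ, f ξ * cos ⟪x, ξ⟫

lemma cosTransform_zero_right (f : V → ℝ) : cosTransform f 0 = ∫ ξ, f ξ := by
  simp [cosTransform]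

theorem integrable_mul_cos {X : Type*} [MeasurableSpace X] {μ : Measure X} {f g : X → ℝ}
    (hf : Integrable f μ) (hg : Measurable g) : Integrable (fun x => f x * cos (g x)) μ :=
  hf.mul_bdd (c := 1) hg.cos.aestronglyMeasurable (ae_of_all _ fun x => abs_cos_le_one (g x))

theorem integrable_mul_cos_inner {f : V → ℝ} (hf : Integrable f) (x : V) :
    Integrable (fun ξ => f ξ * cos ⟪x, ξ⟫) :=
  integrable_mul_cos hf (by fun_prop)

lemma cosTransform_add {f g : V → ℝ} (hf : Integrable f) (hg : Integrable g) (x : V) :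
    cosTransform (fun ξ => f ξ + g ξ) x = cosTransform f x + cosTransform g x := by
  simp_rw [cosTransform, add_mul]
  exact integral_add (integrable_mul_cos_inner hf x) (integrable_mul_cos_inner hg x)

lemma cosTransform_const_mul (c : ℝ) (f : V → ℝ) (x : V) :
    cosTransform (fun ξ => c * f ξ) x = c * cosTransform f x := by
  simp_rw [cosTransform, mul_assoc]
  exact integral_const_mul _ _

theorem norm_cosTransform_le {f : V → ℝ} (hf : Integrable f) (x : V) :
    ‖cosTransform f x‖ ≤ ∫ ξ, ‖f ξ‖ := by
  refine norm_integral_le_of_norm_le hf.norm (ae_of_all _ fun ξ => ?_)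
  simpa using mul_le_of_le_one_right (abs_nonneg (f ξ)) (abs_cos_le_one ⟪x, ξ⟫)

theorem continuous_cosTransform {f : V → ℝ} (hf : Integrable f) :
    Continuous (cosTransform f) :=
  continuous_of_dominated (fun x => (integrable_mul_cos_inner hf x).aestronglyMeasurable)
    (fun x => ae_of_all _ fun ξ => by
      simpa using mul_le_of_le_one_right (abs_nonneg (f ξ)) (abs_cos_le_one ⟪x, ξ⟫))
    hf.norm (ae_of_all _ fun ξ => by fun_prop)

theorem integral_cosTransform_mul {f g : V → ℝ} (hf : Integrable f) (hg : Integrable g) :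
    ∫ x, cosTransform f x * g x = ∫ ξ, f ξ * cosTransform g ξ := by
  have hfg : Integrable (fun p : V × V => g p.1 * f p.2 * cos ⟪p.1, p.2⟫) :=
    integrable_mul_cos (hg.mul_prod hf) (by fun_prop)
  calc ∫ x, cosTransform f x * g x
      = ∫ x, ∫ ξ, g x * f ξ * cos ⟪x, ξ⟫ := by
        simp only [cosTransform, ← integral_mul_const]
        congr! 4; ring
    _ = ∫ ξ, ∫ x, g x * f ξ * cos ⟪x, ξ⟫ := integral_integral_swap hfg
    _ = ∫ ξ, f ξ * cosTransform g ξ := by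
        simp only [cosTransform, ← integral_const_mul, real_inner_comm]
        congr! 4; ring

theorem integrable_exp_neg_mul_sq_norm {b : ℝ} (hb : 0 < b) :
    Integrable (fun v : V => rexp (-b * ‖v‖ ^ 2)) := by
  simpa [← Complex.ofReal_pow, ← Complex.ofReal_neg, ← Complex.ofReal_mul, Complex.exp_ofReal_re]
    using (GaussianFourier.integrable_cexp_neg_mul_sq_norm_add (b := (b : ℂ)) (V := V)
      (by simpa) 0 0).re

theorem cosTransform_exp_neg_mul_sq_norm {b : ℝ} (hb : 0 < b) (w : V) :
    cosTransform (fun v : V => rexp (-b * ‖v‖ ^ 2)) w =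
      (π / b) ^ (finrank ℝ V / 2 : ℝ) * rexp (-(‖w‖ ^ 2 / (4 * b))) := by
  have hb' : 0 < (b : ℂ).re := by simpa
  have hre (v : V) : rexp (-b * ‖v‖ ^ 2) * cos ⟪w, v⟫ =
      (Complex.exp (-(b : ℂ) * (‖v‖ : ℂ) ^ 2 + Complex.I * (⟪w, v⟫ : ℝ))).re := by
    rw [Complex.exp_re]
    simp [← Complex.ofReal_pow]
  have hval : ((π : ℂ) / b) ^ ((finrank ℝ V : ℂ) / 2) *
      Complex.exp (Complex.I ^ 2 * (‖w‖ : ℂ) ^ 2 / (4 * b)) =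
        ((π / b) ^ (finrank ℝ V / 2 : ℝ) * rexp (-(‖w‖ ^ 2 / (4 * b))) : ℝ) := by
    rw [Complex.ofReal_mul, Complex.ofReal_cpow (by positivity)]
    push_cast [Complex.I_sq]
    ring_nf
  calc cosTransform (fun v : V => rexp (-b * ‖v‖ ^ 2)) w
      = (∫ v : V, Complex.exp (-(b : ℂ) * (‖v‖ : ℂ) ^ 2 + Complex.I * (⟪w, v⟫ : ℝ))).re := by
        simp only [cosTransform, hre]
        exact integral_re
          (GaussianFourier.integrable_cexp_neg_mul_sq_norm_add hb' Complex.I w)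
    _ = _ := by
        rw [GaussianFourier.integral_cexp_neg_mul_sq_norm_add hb', hval, Complex.ofReal_re]

end CosineTransform

theorem integrable_prod_of_nonneg {X Y : Type*} [MeasurableSpace X] [MeasurableSpace Y]
    {μ : Measure X} {ν : Measure Y} [SFinite ν] {f : X × Y → ℝ} {g : X → ℝ}
    (hf : AEStronglyMeasurable f (μ.prod ν)) (h0 : ∀ᵐ x ∂μ, ∀ᵐ y ∂ν, 0 ≤ f (x, y))
    (hsection : ∀ᵐ x ∂μ, Integrable (fun y => f (x, y)) ν)
    (hval : ∀ᵐ x ∂μ, ∫ y, f (x, y) ∂ν = g x) (hg : Integrable g μ) :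
    Integrable f (μ.prod ν) := by
  refine (integrable_prod_iff hf).2 ⟨hsection, hg.congr ?_⟩
  filter_upwards [h0, hval] with x hx hgx
  rw [← hgx]
  exact integral_congr_ae (hx.mono fun y hy => (norm_of_nonneg hy).symm)

section GammaIntegral

variable {β : ℝ}

lemma abs_Gamma_neg (h0 : 0 < β) (h1 : β < 1) : |Gamma (-β)| = Gamma (1 - β) / β := by
  have hrec : Gamma (1 - β) = -β * Gamma (-β) := by
    rw [← Gamma_add_one (by linarith), neg_add_eq_sub]
  have hpos : 0 < Gamma (1 - β) := Gamma_pos_of_pos (by linarith)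
  rw [show Gamma (-β) = -(Gamma (1 - β) / β) by rw [hrec]; field_simp, abs_neg,
    abs_of_pos (div_pos hpos h0)]

lemma abs_Gamma_neg_pos (h0 : 0 < β) (h1 : β < 1) : 0 < |Gamma (-β)| := by
  rw [abs_Gamma_neg h0 h1]
  exact div_pos (Gamma_pos_of_pos (by linarith)) h0

lemma integrableOn_exp_neg_mul_mul_rpow_neg {s : ℝ} (hs : 0 < s) (h1 : β < 1) :
    IntegrableOn (fun r : ℝ => rexp (-(s * r)) * r ^ (-β)) (Set.Ioi 0) := by
  simpa [mul_comm] using integrableOn_rpow_mul_exp_neg_mul_rpow (p := 1) (s := -β) (b := s)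
    (by linarith) one_pos hs

lemma integral_exp_neg_mul_mul_rpow_neg {s : ℝ} (hs : 0 < s) (h1 : β < 1) :
    ∫ r in Set.Ioi (0 : ℝ), rexp (-(s * r)) * r ^ (-β) = Gamma (1 - β) * s ^ (β - 1) := by
  have h := integral_rpow_mul_exp_neg_mul_Ioi (a := 1 - β) (by linarith) hs
  rw [sub_sub_cancel_left, one_div, inv_rpow hs.le, ← rpow_neg hs.le, neg_sub] at h
  simpa [mul_comm] using h

lemma integral_Ioc_exp_neg_mul_mul_rpow_neg {k r : ℝ} (hk : 0 ≤ k) (hr : 0 < r) :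
    ∫ s in Set.Ioc 0 k, rexp (-(s * r)) * r ^ (-β) = (1 - rexp (-(k * r))) * r ^ (-1 - β) := by
  have hexp : ∫ s in (0 : ℝ)..k, rexp (-(s * r)) = (1 - rexp (-(k * r))) * r⁻¹ := by
    simp_rw [← mul_neg]
    rw [intervalIntegral.integral_comp_mul_right _ (neg_ne_zero.2 hr.ne'), integral_exp]
    simp only [zero_mul, exp_zero, inv_neg, smul_eq_mul]
    ring
  rw [integral_mul_const, ← intervalIntegral.integral_of_le hk, hexp,
    show -1 - β = -1 + -β by ring, rpow_add hr, rpow_neg_one, mul_assoc]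

lemma integrableOn_Ioc_rpow_sub_one (h0 : 0 < β) {k : ℝ} (hk : 0 ≤ k) :
    IntegrableOn (fun s : ℝ => s ^ (β - 1)) (Set.Ioc 0 k) :=
  (intervalIntegrable_iff_integrableOn_Ioc_of_le hk).1
    (intervalIntegral.intervalIntegrable_rpow' (by linarith))

lemma integrable_exp_neg_mul_mul_rpow_neg (h0 : 0 < β) (h1 : β < 1) {k : ℝ} (hk : 0 ≤ k) :
    Integrable (fun p : ℝ × ℝ => rexp (-(p.1 * p.2)) * p.2 ^ (-β))
      ((volume.restrict (Set.Ioc 0 k)).prod (volume.restrict (Set.Ioi 0))) := by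
  refine integrable_prod_of_nonneg (g := fun s => Gamma (1 - β) * s ^ (β - 1))
    (Measurable.aestronglyMeasurable (by fun_prop)) (ae_of_all _ fun s => ?_) ?_ ?_
    ((integrableOn_Ioc_rpow_sub_one h0 hk).const_mul _)
  · filter_upwards [ae_restrict_mem measurableSet_Ioi] with r (hr : 0 < r)
    positivity
  · filter_upwards [ae_restrict_mem measurableSet_Ioc] with s hs
    exact integrableOn_exp_neg_mul_mul_rpow_neg hs.1 h1
  · filter_upwards [ae_restrict_mem measurableSet_Ioc] with s hs
    exact integral_exp_neg_mul_mul_rpow_neg hs.1 h1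

lemma integrableOn_one_sub_exp_neg_mul_mul_rpow (h0 : 0 < β) (h1 : β < 1) {k : ℝ} (hk : 0 ≤ k) :
    IntegrableOn (fun r : ℝ => (1 - rexp (-(k * r))) * r ^ (-1 - β)) (Set.Ioi 0) :=
  IntegrableOn.congr_fun (integrable_exp_neg_mul_mul_rpow_neg h0 h1 hk).integral_prod_right
    (fun _ hr => integral_Ioc_exp_neg_mul_mul_rpow_neg hk hr) measurableSet_Ioi

-- `(1 - e^{-kr}) / r` is the integral of `e^{-sr}` over `0 < s ≤ k`; integrating in `r` first
-- leaves Euler's integral.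
theorem integral_one_sub_exp_neg_mul_mul_rpow (h0 : 0 < β) (h1 : β < 1) {k : ℝ} (hk : 0 ≤ k) :
    ∫ r in Set.Ioi (0 : ℝ), (1 - rexp (-(k * r))) * r ^ (-1 - β) = k ^ β * |Gamma (-β)| :=
  calc ∫ r in Set.Ioi (0 : ℝ), (1 - rexp (-(k * r))) * r ^ (-1 - β)
      = ∫ r in Set.Ioi (0 : ℝ), ∫ s in Set.Ioc 0 k, rexp (-(s * r)) * r ^ (-β) :=
        setIntegral_congr_fun measurableSet_Ioi
          fun _ hr => (integral_Ioc_exp_neg_mul_mul_rpow_neg hk hr).symm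
    _ = ∫ s in Set.Ioc 0 k, ∫ r in Set.Ioi (0 : ℝ), rexp (-(s * r)) * r ^ (-β) :=
        (integral_integral_swap (integrable_exp_neg_mul_mul_rpow_neg h0 h1 hk)).symm
    _ = ∫ s in Set.Ioc 0 k, Gamma (1 - β) * s ^ (β - 1) :=
        setIntegral_congr_fun measurableSet_Ioc
          fun _ hs => integral_exp_neg_mul_mul_rpow_neg hs.1 h1
    _ = k ^ β * |Gamma (-β)| := by
        rw [integral_const_mul, ← intervalIntegral.integral_of_le hk,
          integral_rpow (Or.inl (by linarith)), sub_add_cancel, zero_rpow h0.ne', sub_zero,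
          abs_Gamma_neg h0 h1]
        ring

lemma comp_inv_one_sub_exp_neg_mul_mul_rpow (k : ℝ) {r : ℝ} (hr : 0 < r) :
    (|(-1 : ℝ)| * r ^ ((-1 : ℝ) - 1)) •
        ((1 - rexp (-(k * r ^ (-1 : ℝ)))) * (r ^ (-1 : ℝ)) ^ (-1 - β)) =
      (1 - rexp (-(k / r))) * r ^ (β - 1) := by
  have hpow : r ^ (β - 1) = r ^ ((-1 : ℝ) - 1) * (r ^ (-1 : ℝ)) ^ (-1 - β) := by
    rw [← rpow_mul hr.le, ← rpow_add hr]
    ring_nf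
  rw [hpow, rpow_neg_one, ← div_eq_mul_inv, abs_neg, abs_one, one_mul, smul_eq_mul]
  ring

theorem integrableOn_one_sub_exp_neg_div_mul_rpow (h0 : 0 < β) (h1 : β < 1) {k : ℝ}
    (hk : 0 ≤ k) :
    IntegrableOn (fun r : ℝ => (1 - rexp (-(k / r))) * r ^ (β - 1)) (Set.Ioi 0) :=
  ((integrableOn_Ioi_comp_rpow_iff _ (by norm_num)).2
    (integrableOn_one_sub_exp_neg_mul_mul_rpow h0 h1 hk)).congr_fun
    (fun _ hr => comp_inv_one_sub_exp_neg_mul_mul_rpow k hr) measurableSet_Ioi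

theorem integral_one_sub_exp_neg_div_mul_rpow (h0 : 0 < β) (h1 : β < 1) {k : ℝ} (hk : 0 ≤ k) :
    ∫ r in Set.Ioi (0 : ℝ), (1 - rexp (-(k / r))) * r ^ (β - 1) = k ^ β * |Gamma (-β)| := by
  rw [← integral_one_sub_exp_neg_mul_mul_rpow h0 h1 hk,
    ← integral_comp_rpow_Ioi (fun r => (1 - rexp (-(k * r))) * r ^ (-1 - β))
      (by norm_num : (-1 : ℝ) ≠ 0)]
  exact setIntegral_congr_fun measurableSet_Ioi
    fun _ hr => (comp_inv_one_sub_exp_neg_mul_mul_rpow k hr).symm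

lemma integral_rpow_sub_one_mul_exp_neg_mul_sq {a c : ℝ} (ha : 0 < a) (hc : 0 < c) :
    ∫ ρ in Set.Ioi (0 : ℝ), ρ ^ (a - 1) * rexp (-ρ * c ^ 2) = Gamma a * c ^ (-(2 * a)) := by
  have hpow : (1 / c ^ 2) ^ a = c ^ (-(2 * a)) := by
    rw [one_div, ← rpow_two, ← rpow_neg hc.le, ← rpow_mul hc.le, neg_mul]
  simp_rw [neg_mul, mul_comm _ (c ^ 2)]
  rw [integral_rpow_mul_exp_neg_mul_Ioi ha (by positivity), hpow, mul_comm]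

end GammaIntegral

section LevyDensity

/-- `k` is the density of a Lévy measure: `∫ min(1, |y|²) k(y) dy < ∞`. -/
structure IsLevyDensity (k : V → ℝ) : Prop where
  measurable : Measurable k
  nonneg : ∀ y, 0 ≤ k y
  integrable : Integrable fun y => min 1 (‖y‖ ^ 2) * k y

/-- The symbol `ξ ↦ ∫ (1 - cos⟨ξ, y⟩) k(y) dy` of the symmetric Lévy operator with density `k`. -/
noncomputable def levySymbol (k : V → ℝ) (ξ : V) : ℝ :=
  ∫ y, (1 - cos ⟪ξ, y⟫) * k y

/-- The density `ν` of the isotropic `α`-stable Lévy measure, normalised to have symbol `|ξ|^α`. -/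
noncomputable def stableDensity (α : ℝ) (y : V) : ℝ :=
  2 ^ α * Gamma ((finrank ℝ V + α) / 2) / (π ^ (finrank ℝ V / 2 : ℝ) * |Gamma (-α / 2)|) *
    ‖y‖ ^ (-(finrank ℝ V + α))

omit [MeasurableSpace V] [BorelSpace V] [FiniteDimensional ℝ V] in
lemma one_sub_cos_inner_nonneg (ξ y : V) : 0 ≤ 1 - cos ⟪ξ, y⟫ :=
  sub_nonneg.2 (cos_le_one _)

omit [MeasurableSpace V] [BorelSpace V] [FiniteDimensional ℝ V] in
lemma one_sub_cos_inner_le (ξ y : V) :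
    1 - cos ⟪ξ, y⟫ ≤ (2 + ‖ξ‖ ^ 2) * min 1 (‖y‖ ^ 2) := by
  have hinner : ⟪ξ, y⟫ ^ 2 ≤ ‖ξ‖ ^ 2 * ‖y‖ ^ 2 := by
    rw [← mul_pow, ← sq_abs]
    exact pow_le_pow_left₀ (abs_nonneg _) (abs_real_inner_le_norm ξ y) 2
  have hquad := one_sub_sq_div_two_le_cos (x := ⟪ξ, y⟫)
  have hbdd := neg_one_le_cos ⟪ξ, y⟫
  rcases le_total 1 (‖y‖ ^ 2) with hy | hy
  · rw [min_eq_left hy]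
    nlinarith [sq_nonneg ‖ξ‖]
  · rw [min_eq_right hy]
    nlinarith [sq_nonneg ‖y‖, sq_nonneg ‖ξ‖, mul_nonneg (sq_nonneg ‖ξ‖) (sq_nonneg ‖y‖)]

lemma levySymbol_eq_sub {k : V → ℝ} (hk : Integrable k) (ξ : V) :
    levySymbol k ξ = (∫ y, k y) - cosTransform k ξ := by
  simp_rw [levySymbol, cosTransform, sub_mul, one_mul, mul_comm (cos _)]
  exact integral_sub hk (integrable_mul_cos_inner hk ξ)

namespace IsLevyDensity

variable {k : V → ℝ}

lemma const_mul (hk : IsLevyDensity k) {c : ℝ} (hc : 0 ≤ c) : IsLevyDensity fun y => c * k y where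
  measurable := hk.measurable.const_mul c
  nonneg y := mul_nonneg hc (hk.nonneg y)
  integrable := (hk.integrable.const_mul c).congr (ae_of_all _ fun y => by ring)

lemma integrable_one_sub_cos_mul (hk : IsLevyDensity k) (ξ : V) :
    Integrable fun y => (1 - cos ⟪ξ, y⟫) * k y := by
  have hm := hk.measurable
  refine (hk.integrable.const_mul (2 + ‖ξ‖ ^ 2)).mono'
    (Measurable.aestronglyMeasurable (by fun_prop)) (ae_of_all _ fun y => ?_)
  rw [norm_of_nonneg (mul_nonneg (one_sub_cos_inner_nonneg ξ y) (hk.nonneg y)), ← mul_assoc]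
  exact mul_le_mul_of_nonneg_right (one_sub_cos_inner_le ξ y) (hk.nonneg y)

lemma levySymbol_nonneg (hk : IsLevyDensity k) (ξ : V) : 0 ≤ levySymbol k ξ :=
  integral_nonneg fun y => mul_nonneg (one_sub_cos_inner_nonneg ξ y) (hk.nonneg y)

end IsLevyDensity

lemma levySymbol_const_mul (c : ℝ) (k : V → ℝ) (ξ : V) :
    levySymbol (fun y => c * k y) ξ = c * levySymbol k ξ := by
  simp_rw [levySymbol, ← integral_const_mul, mul_left_comm c]

variable {α : ℝ}

lemma integrable_min_one_sq_norm_mul_rpow (hα0 : 0 < α) (hα2 : α < 2) :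
    Integrable fun y : V => min 1 (‖y‖ ^ 2) * ‖y‖ ^ (-(finrank ℝ V + α)) := by
  rcases subsingleton_or_nontrivial V with _ | _
  · simp [Subsingleton.elim _ (0 : V)]
  have hpow (r : ℝ) : r ^ (finrank ℝ V - 1) = r ^ (finrank ℝ V - 1 : ℝ) := by
    rw [← rpow_natCast, Nat.cast_pred finrank_pos]
  rw [integrable_fun_norm_addHaar volume
    (f := fun r : ℝ => min 1 (r ^ 2) * r ^ (-(finrank ℝ V + α))),
    ← Set.Ioc_union_Ioi_eq_Ioi (zero_le_one' ℝ)]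
  refine IntegrableOn.union ?_ ?_
  · refine (integrableOn_Ioc_rpow_sub_one (β := 2 - α) (by linarith) zero_le_one).congr_fun
      (fun r hr => ?_) measurableSet_Ioc
    rw [smul_eq_mul, hpow, min_eq_right (pow_le_one₀ hr.1.le hr.2), ← rpow_two,
      ← rpow_add hr.1, ← rpow_add hr.1]
    ring_nf
  · refine (integrableOn_Ioi_rpow_of_lt (a := -1 - α) (by linarith) one_pos).congr_fun
      (fun r (hr : 1 < r) => ?_) measurableSet_Ioi
    have hr0 := one_pos.trans hr
    rw [smul_eq_mul, hpow, min_eq_left (one_le_pow₀ hr.le), one_mul, ← rpow_add hr0]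
    ring_nf

theorem isLevyDensity_stableDensity (hα0 : 0 < α) (hα2 : α < 2) :
    IsLevyDensity (stableDensity α : V → ℝ) where
  measurable := by unfold stableDensity; fun_prop
  nonneg y := by
    have : 0 < Gamma ((finrank ℝ V + α) / 2) := Gamma_pos_of_pos (by positivity)
    unfold stableDensity
    positivity
  integrable := by
    refine ((integrable_min_one_sq_norm_mul_rpow hα0 hα2).const_mul
      (2 ^ α * Gamma ((finrank ℝ V + α) / 2) /
        (π ^ (finrank ℝ V / 2 : ℝ) * |Gamma (-α / 2)|))).congr (ae_of_all _ fun y => ?_)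
    dsimp only [stableDensity]
    ring

lemma integrable_exp_neg_mul_sq_norm_mul_one_sub_cos {ρ : ℝ} (hρ : 0 < ρ) (ξ : V) :
    Integrable fun y : V => rexp (-ρ * ‖y‖ ^ 2) * (1 - cos ⟪ξ, y⟫) := by
  simp_rw [mul_sub, mul_one]
  exact (integrable_exp_neg_mul_sq_norm hρ).sub
    (integrable_mul_cos_inner (integrable_exp_neg_mul_sq_norm hρ) ξ)

lemma integral_exp_neg_mul_sq_norm_mul_one_sub_cos {ρ : ℝ} (hρ : 0 < ρ) (ξ : V) :
    ∫ y : V, rexp (-ρ * ‖y‖ ^ 2) * (1 - cos ⟪ξ, y⟫) =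
      (π / ρ) ^ (finrank ℝ V / 2 : ℝ) * (1 - rexp (-(‖ξ‖ ^ 2 / 4 / ρ))) := by
  have hint := integrable_exp_neg_mul_sq_norm (V := V) hρ
  have hcos := cosTransform_exp_neg_mul_sq_norm (V := V) hρ
  simp_rw [mul_sub, mul_one]
  rw [integral_sub hint (integrable_mul_cos_inner hint ξ), ← cosTransform_zero_right, hcos,
    ← cosTransform, hcos]
  simp [div_div]

lemma integral_rpow_mul_exp_mul_one_sub_cos (ξ : V) {ρ : ℝ} (hρ : 0 < ρ) :
    ∫ y : V, ρ ^ ((finrank ℝ V + α) / 2 - 1) * (rexp (-ρ * ‖y‖ ^ 2) * (1 - cos ⟪ξ, y⟫)) =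
      π ^ (finrank ℝ V / 2 : ℝ) *
        ((1 - rexp (-(‖ξ‖ ^ 2 / 4 / ρ))) * ρ ^ (α / 2 - 1)) := by
  rw [integral_const_mul, integral_exp_neg_mul_sq_norm_mul_one_sub_cos hρ,
    div_rpow pi_pos.le hρ.le,
    show (finrank ℝ V + α) / 2 - 1 = finrank ℝ V / 2 + (α / 2 - 1) by ring, rpow_add hρ]
  field_simp

lemma integrable_rpow_mul_exp_mul_one_sub_cos (hα0 : 0 < α) (hα2 : α < 2) (ξ : V) :
    Integrable (fun p : ℝ × V => p.1 ^ ((finrank ℝ V + α) / 2 - 1) *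
      (rexp (-p.1 * ‖p.2‖ ^ 2) * (1 - cos ⟪ξ, p.2⟫)))
      ((volume.restrict (Set.Ioi 0)).prod volume) := by
  have hmem := ae_restrict_mem (μ := volume) (measurableSet_Ioi (a := (0 : ℝ)))
  refine integrable_prod_of_nonneg (Measurable.aestronglyMeasurable (by fun_prop)) ?_ ?_
    (hmem.mono fun ρ hρ => integral_rpow_mul_exp_mul_one_sub_cos ξ hρ)
    ((integrableOn_one_sub_exp_neg_div_mul_rpow (by linarith) (by linarith)
      (by positivity)).const_mul _)
  · filter_upwards [hmem] with ρ (hρ : 0 < ρ)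
    exact ae_of_all _ fun y => mul_nonneg (by positivity)
      (mul_nonneg (exp_pos _).le (one_sub_cos_inner_nonneg ξ y))
  · filter_upwards [hmem] with ρ hρ
    exact (integrable_exp_neg_mul_sq_norm_mul_one_sub_cos hρ ξ).const_mul _

lemma integral_one_sub_cos_mul_Gamma_mul_rpow (hα0 : 0 < α) (hα2 : α < 2) (ξ : V) :
    ∫ y : V, (1 - cos ⟪ξ, y⟫) *
        (Gamma ((finrank ℝ V + α) / 2) * ‖y‖ ^ (-(finrank ℝ V + α))) =
      π ^ (finrank ℝ V / 2 : ℝ) * ((‖ξ‖ ^ 2 / 4) ^ (α / 2) * |Gamma (-(α / 2))|) := by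
  set a := (finrank ℝ V + α) / 2 with ha
  have hmix (y : V) : (1 - cos ⟪ξ, y⟫) * (Gamma a * ‖y‖ ^ (-(finrank ℝ V + α))) =
      ∫ ρ in Set.Ioi (0 : ℝ), ρ ^ (a - 1) * (rexp (-ρ * ‖y‖ ^ 2) * (1 - cos ⟪ξ, y⟫)) := by
    rcases eq_or_ne y 0 with rfl | hy
    · simp
    simp_rw [← mul_assoc]
    rw [integral_mul_const,
      integral_rpow_sub_one_mul_exp_neg_mul_sq (by positivity) (norm_pos_iff.2 hy), ha]
    ring_nf
  simp_rw [hmix]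
  rw [← integral_integral_swap (integrable_rpow_mul_exp_mul_one_sub_cos hα0 hα2 ξ),
    setIntegral_congr_fun measurableSet_Ioi
      fun ρ hρ => integral_rpow_mul_exp_mul_one_sub_cos ξ hρ,
    integral_const_mul,
    integral_one_sub_exp_neg_div_mul_rpow (by linarith) (by linarith) (by positivity)]

theorem levySymbol_stableDensity (hα0 : 0 < α) (hα2 : α < 2) (ξ : V) :
    levySymbol (stableDensity α) ξ = ‖ξ‖ ^ α := by
  have hΓ := abs_Gamma_neg_pos (β := α / 2) (by linarith) (by linarith)
  have hpow : (‖ξ‖ ^ 2 / 4) ^ (α / 2) = ‖ξ‖ ^ α / 2 ^ α := by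
    rw [show ‖ξ‖ ^ 2 / 4 = (‖ξ‖ / 2) ^ (2 : ℝ) by rw [rpow_two]; ring, ← rpow_mul (by positivity),
      mul_div_cancel₀ α two_ne_zero, div_rpow (norm_nonneg ξ) zero_le_two]
  have hscale (y : V) : (1 - cos ⟪ξ, y⟫) * stableDensity α y =
      2 ^ α / (π ^ (finrank ℝ V / 2 : ℝ) * |Gamma (-(α / 2))|) *
        ((1 - cos ⟪ξ, y⟫) *
          (Gamma ((finrank ℝ V + α) / 2) * ‖y‖ ^ (-(finrank ℝ V + α)))) := by
    rw [stableDensity, neg_div]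
    ring
  simp_rw [levySymbol, hscale]
  rw [integral_const_mul, integral_one_sub_cos_mul_Gamma_mul_rpow hα0 hα2, hpow]
  field_simp

end LevyDensity

section Positivity

/-- Integrable functions with nonnegative cosine transform; for even functions this says that the
inverse Fourier transform is a positive density. -/
structure HasNonnegCosTransform (w : V → ℝ) : Prop where
  integrable : Integrable w
  nonneg : ∀ x, 0 ≤ cosTransform w x

namespace HasNonnegCosTransform

variable {w v : V → ℝ}

lemma zero : HasNonnegCosTransform (fun _ : V => (0 : ℝ)) where
  integrable := integrable_zero _ _ _
  nonneg x := by simp [cosTransform]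

lemma add (hw : HasNonnegCosTransform w) (hv : HasNonnegCosTransform v) :
    HasNonnegCosTransform fun ξ => w ξ + v ξ where
  integrable := hw.integrable.add hv.integrable
  nonneg x := by
    rw [cosTransform_add hw.integrable hv.integrable]
    exact add_nonneg (hw.nonneg x) (hv.nonneg x)

lemma const_mul (hw : HasNonnegCosTransform w) {c : ℝ} (hc : 0 ≤ c) :
    HasNonnegCosTransform fun ξ => c * w ξ where
  integrable := hw.integrable.const_mul c
  nonneg x := by
    rw [cosTransform_const_mul]
    exact mul_nonneg hc (hw.nonneg x)

lemma mul_cos_inner (hw : HasNonnegCosTransform w) (y : V) :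
    HasNonnegCosTransform fun ξ => w ξ * cos ⟪y, ξ⟫ where
  integrable := integrable_mul_cos_inner hw.integrable y
  nonneg x := by
    have hprod (ξ : V) : w ξ * cos ⟪y, ξ⟫ * cos ⟪x, ξ⟫ =
        (w ξ * cos ⟪x + y, ξ⟫ + w ξ * cos ⟪x - y, ξ⟫) / 2 := by
      rw [inner_add_left, inner_sub_left, cos_add, cos_sub]
      ring
    simp_rw [cosTransform, hprod]
    rw [integral_div, integral_add (integrable_mul_cos_inner hw.integrable _)
      (integrable_mul_cos_inner hw.integrable _)]
    exact div_nonneg (add_nonneg (hw.nonneg _) (hw.nonneg _)) zero_le_two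

lemma mul_cosTransform (hw : HasNonnegCosTransform w) {k : V → ℝ} (hk : Integrable k)
    (hk0 : ∀ y, 0 ≤ k y) : HasNonnegCosTransform fun ξ => w ξ * cosTransform k ξ where
  integrable := hw.integrable.mul_bdd (continuous_cosTransform hk).aestronglyMeasurable
    (ae_of_all _ (norm_cosTransform_le hk))
  nonneg x := by
    have hparseval := integral_cosTransform_mul hk (integrable_mul_cos_inner hw.integrable x)
    calc 0 ≤ ∫ y, k y * cosTransform (fun ξ => w ξ * cos ⟪x, ξ⟫) y :=
          integral_nonneg fun y => mul_nonneg (hk0 y) ((hw.mul_cos_inner x).nonneg y)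
      _ = ∫ ξ, cosTransform k ξ * (w ξ * cos ⟪x, ξ⟫) := hparseval.symm
      _ = cosTransform (fun ξ => w ξ * cosTransform k ξ) x := by
          simp_rw [cosTransform]
          congr! 2; ring

theorem of_tendsto {u : ℕ → V → ℝ} {g : V → ℝ} (hu : ∀ n, HasNonnegCosTransform (u n))
    (hg : Integrable g) (hle : ∀ n ξ, ‖u n ξ‖ ≤ g ξ)
    (hlim : ∀ ξ, Tendsto (fun n => u n ξ) atTop (𝓝 (w ξ))) : HasNonnegCosTransform w where
  integrable := hg.mono'
    (aestronglyMeasurable_of_tendsto_ae atTop (fun n => (hu n).integrable.aestronglyMeasurable)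
      (ae_of_all _ hlim))
    (ae_of_all _ fun ξ => le_of_tendsto' (hlim ξ).norm fun n => hle n ξ)
  nonneg x := by
    refine ge_of_tendsto' (tendsto_integral_of_dominated_convergence g
      (fun n => (integrable_mul_cos_inner (hu n).integrable x).aestronglyMeasurable) hg
      (fun n => ae_of_all _ fun ξ => ?_) (ae_of_all _ fun ξ => (hlim ξ).mul_const _))
      fun n => (hu n).nonneg x
    rw [norm_mul]
    exact (mul_le_of_le_one_right (norm_nonneg _) (abs_cos_le_one _)).trans (hle n ξ)

lemma mul_cosTransform_pow (hw : HasNonnegCosTransform w) {k : V → ℝ} (hk : Integrable k)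
    (hk0 : ∀ y, 0 ≤ k y) (n : ℕ) : HasNonnegCosTransform fun ξ => w ξ * cosTransform k ξ ^ n := by
  induction n with
  | zero => simpa using hw
  | succ n ih => simpa only [pow_succ, mul_assoc] using ih.mul_cosTransform hk hk0

-- The case of a compound Poisson process: `e^{k̂}` is the sum of its exponential series.
lemma mul_exp_cosTransform (hw : HasNonnegCosTransform w) {k : V → ℝ} (hk : Integrable k)
    (hk0 : ∀ y, 0 ≤ k y) : HasNonnegCosTransform fun ξ => w ξ * rexp (cosTransform k ξ) := by
  have hpartial (N : ℕ) : HasNonnegCosTransform fun ξ =>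
      ∑ n ∈ Finset.range N, w ξ * (cosTransform k ξ ^ n / n.factorial) := by
    induction N with
    | zero => simpa using zero
    | succ N ih =>
      simp_rw [Finset.sum_range_succ]
      convert! ih.add ((hw.mul_cosTransform_pow hk hk0 N).const_mul
        (inv_nonneg.2 (Nat.cast_nonneg N.factorial))) using 3
      ring
  refine of_tendsto hpartial (hw.integrable.norm.mul_const (rexp (∫ y, ‖k y‖)))
    (fun N ξ => ?_) fun ξ => ?_
  · rw [← Finset.mul_sum, norm_mul]
    gcongr
    calc ‖∑ n ∈ Finset.range N, cosTransform k ξ ^ n / n.factorial‖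
        ≤ ∑ n ∈ Finset.range N, ‖cosTransform k ξ‖ ^ n / n.factorial :=
          (norm_sum_le _ _).trans_eq (by simp)
      _ ≤ rexp ‖cosTransform k ξ‖ := sum_le_exp_of_nonneg (norm_nonneg _) N
      _ ≤ rexp (∫ y, ‖k y‖) := exp_le_exp.2 (norm_cosTransform_le hk ξ)
  · simp_rw [← Finset.mul_sum]
    have hseries := (NormedSpace.expSeries_div_hasSum_exp (cosTransform k ξ)).tendsto_sum_nat
    rw [← exp_eq_exp_ℝ] at hseries
    exact hseries.const_mul (w ξ)

lemma mul_exp_neg_levySymbol_of_integrable (hw : HasNonnegCosTransform w) {k : V → ℝ}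
    (hk : Integrable k) (hk0 : ∀ y, 0 ≤ k y) :
    HasNonnegCosTransform fun ξ => w ξ * rexp (-levySymbol k ξ) := by
  convert! (hw.mul_exp_cosTransform hk hk0).const_mul (exp_pos (-∫ y, k y)).le using 2 with ξ
  rw [levySymbol_eq_sub hk, mul_left_comm, ← exp_add]
  ring_nf

end HasNonnegCosTransform

/-- Integrable truncations of a Lévy density `k`, increasing to `k` off the origin. -/
noncomputable def levyTruncation (k : V → ℝ) (n : ℕ) (y : V) : ℝ :=
  min 1 (n * min 1 (‖y‖ ^ 2)) * k y

section Truncation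

variable {k : V → ℝ}

lemma levyTruncation_nonneg (hk : IsLevyDensity k) (n : ℕ) (y : V) : 0 ≤ levyTruncation k n y :=
  mul_nonneg (by positivity) (hk.nonneg y)

lemma integrable_levyTruncation (hk : IsLevyDensity k) (n : ℕ) :
    Integrable (levyTruncation k n) := by
  have hm := hk.measurable
  refine (hk.integrable.const_mul n).mono'
    (Measurable.aestronglyMeasurable (by unfold levyTruncation; fun_prop)) (ae_of_all _ fun y => ?_)
  rw [norm_of_nonneg (levyTruncation_nonneg hk n y), ← mul_assoc]
  exact mul_le_mul_of_nonneg_right (min_le_right _ _) (hk.nonneg y)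

omit [InnerProductSpace ℝ V] [MeasurableSpace V] [BorelSpace V] [FiniteDimensional ℝ V] in
lemma eventually_levyTruncation_eq (k : V → ℝ) {y : V} (hy : y ≠ 0) :
    ∀ᶠ n in atTop, levyTruncation k n y = k y := by
  have hpos : 0 < min 1 (‖y‖ ^ 2) := by positivity
  filter_upwards [tendsto_natCast_atTop_atTop.eventually_ge_atTop (1 / min 1 (‖y‖ ^ 2))] with n hn
  rw [levyTruncation, min_eq_left ((div_le_iff₀ hpos).1 hn), one_mul]

lemma tendsto_levySymbol_levyTruncation (hk : IsLevyDensity k) (ξ : V) :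
    Tendsto (fun n => levySymbol (levyTruncation k n) ξ) atTop (𝓝 (levySymbol k ξ)) := by
  have hm := hk.measurable
  refine tendsto_integral_of_dominated_convergence (fun y => (1 - cos ⟪ξ, y⟫) * k y)
    (fun n => Measurable.aestronglyMeasurable (by unfold levyTruncation; fun_prop))
    (hk.integrable_one_sub_cos_mul ξ) (fun n => ae_of_all _ fun y => ?_)
    (ae_of_all _ fun y => ?_)
  · rw [norm_of_nonneg (mul_nonneg (one_sub_cos_inner_nonneg ξ y) (levyTruncation_nonneg hk n y))]
    exact mul_le_mul_of_nonneg_left (mul_le_of_le_one_left (hk.nonneg y) (min_le_left _ _))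
      (one_sub_cos_inner_nonneg ξ y)
  · rcases eq_or_ne y 0 with rfl | hy
    · simp
    · exact tendsto_const_nhds.congr'
        ((eventually_levyTruncation_eq k hy).mono fun n hn => by simp only [hn])

end Truncation

theorem HasNonnegCosTransform.mul_exp_neg_levySymbol {w k : V → ℝ}
    (hw : HasNonnegCosTransform w) (hk : IsLevyDensity k) :
    HasNonnegCosTransform fun ξ => w ξ * rexp (-levySymbol k ξ) := by
  refine .of_tendsto (fun n => hw.mul_exp_neg_levySymbol_of_integrable
    (integrable_levyTruncation hk n) (levyTruncation_nonneg hk n)) hw.integrable.norm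
    (fun n ξ => ?_) fun ξ =>
      ((continuous_exp.tendsto _).comp (tendsto_levySymbol_levyTruncation hk ξ).neg).const_mul _
  have hsymbol : 0 ≤ levySymbol (levyTruncation k n) ξ := integral_nonneg fun y =>
    mul_nonneg (one_sub_cos_inner_nonneg ξ y) (levyTruncation_nonneg hk n y)
  rw [norm_mul, norm_of_nonneg (exp_pos _).le]
  exact mul_le_of_le_one_right (norm_nonneg _) (exp_le_one_iff.2 (neg_nonpos.2 hsymbol))

lemma hasNonnegCosTransform_exp_neg_mul_sq_norm {b : ℝ} (hb : 0 < b) :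
    HasNonnegCosTransform fun ξ : V => rexp (-b * ‖ξ‖ ^ 2) where
  integrable := integrable_exp_neg_mul_sq_norm hb
  nonneg x := by
    rw [cosTransform_exp_neg_mul_sq_norm hb]
    positivity

lemma tendsto_exp_neg_one_div_mul (c : ℝ) :
    Tendsto (fun n : ℕ => rexp (-(1 / ((n : ℝ) + 1)) * c)) atTop (𝓝 1) := by
  simpa [Function.comp_def] using (continuous_exp.tendsto _).comp
    (tendsto_one_div_add_atTop_nhds_zero_nat.neg.mul_const c)

lemma exp_neg_one_div_mul_le_one (n : ℕ) {c : ℝ} (hc : 0 ≤ c) :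
    rexp (-(1 / ((n : ℝ) + 1)) * c) ≤ 1 := by
  rw [exp_le_one_iff, neg_mul, neg_nonpos]
  positivity

theorem hasNonnegCosTransform_exp_neg_levySymbol {k : V → ℝ} (hk : IsLevyDensity k)
    (hint : Integrable fun ξ => rexp (-levySymbol k ξ)) :
    HasNonnegCosTransform fun ξ => rexp (-levySymbol k ξ) := by
  refine .of_tendsto (u := fun n ξ => rexp (-(1 / ((n : ℝ) + 1)) * ‖ξ‖ ^ 2) *
      rexp (-levySymbol k ξ))
    (fun n => (hasNonnegCosTransform_exp_neg_mul_sq_norm (by positivity)).mul_exp_neg_levySymbol hk)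
    hint (fun n ξ => ?_) fun ξ => ?_
  · rw [norm_of_nonneg (by positivity)]
    exact mul_le_of_le_one_left (exp_pos _).le (exp_neg_one_div_mul_le_one n (sq_nonneg _))
  · simpa using (tendsto_exp_neg_one_div_mul (‖ξ‖ ^ 2)).mul_const (rexp (-levySymbol k ξ))

end Positivity

theorem integrable_of_tendsto_integral {X : Type*} [MeasurableSpace X] {μ : Measure X}
    {F : ℕ → X → ℝ} {f : X → ℝ} {a : ℝ} (hF : ∀ n, Integrable (F n) μ) (h0 : ∀ n x, 0 ≤ F n x)
    (hlim : ∀ x, Tendsto (fun n => F n x) atTop (𝓝 (f x)))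
    (hint : Tendsto (fun n => ∫ x, F n x ∂μ) atTop (𝓝 a)) : Integrable f μ := by
  have hf0 (x : X) : 0 ≤ f x := ge_of_tendsto' (hlim x) fun n => h0 n x
  refine ⟨aestronglyMeasurable_of_tendsto_ae atTop (fun n => (hF n).aestronglyMeasurable)
    (ae_of_all _ hlim), (hasFiniteIntegral_iff_ofReal (ae_of_all _ hf0)).2 ?_⟩
  calc ∫⁻ x, ENNReal.ofReal (f x) ∂μ
      = ∫⁻ x, liminf (fun n => ENNReal.ofReal (F n x)) atTop ∂μ :=
        lintegral_congr fun x => ((ENNReal.tendsto_ofReal (hlim x)).liminf_eq).symm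
    _ ≤ liminf (fun n => ∫⁻ x, ENNReal.ofReal (F n x) ∂μ) atTop :=
        lintegral_liminf_le' fun n => (hF n).aemeasurable.ennreal_ofReal
    _ = ENNReal.ofReal a := by
        simp_rw [← ofReal_integral_eq_lintegral_ofReal (hF _) (ae_of_all _ (h0 _))]
        exact (ENNReal.tendsto_ofReal hint).liminf_eq
    _ < ⊤ := ENNReal.ofReal_lt_top

section Inversion

theorem tendsto_integral_gaussian_mul {w : V → ℝ} (hw : Integrable w) (h0 : ContinuousAt w 0) :
    Tendsto (fun c : ℝ => ∫ ξ, (π * c) ^ (finrank ℝ V / 2 : ℝ) * rexp (-π ^ 2 * c * ‖ξ‖ ^ 2) * w ξ)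
      atTop (𝓝 (w 0)) := by
  have hcomplex := tendsto_integral_gaussian_smul' (hw.ofReal (𝕜 := ℂ))
    (Complex.continuous_ofReal.continuousAt.comp h0)
  refine ((Complex.continuous_re.tendsto _).comp hcomplex).congr' ?_
  filter_upwards [eventually_gt_atTop 0] with c hc
  have hreal (ξ : V) : ((π * c : ℂ) ^ (finrank ℝ V / 2 : ℂ) *
      Complex.exp (-π ^ 2 * c * ‖0 - ξ‖ ^ 2)) • (w ξ : ℂ) =
        ((π * c) ^ (finrank ℝ V / 2 : ℝ) * rexp (-π ^ 2 * c * ‖ξ‖ ^ 2) * w ξ : ℝ) := by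
    rw [Complex.ofReal_mul, Complex.ofReal_mul, Complex.ofReal_cpow (by positivity)]
    simp
  simp only [Function.comp_apply, RCLike.ofReal_eq_complex_ofReal, hreal, integral_complex_ofReal,
    Complex.ofReal_re]

theorem tendsto_integral_cosTransform_mul_gaussian {w : V → ℝ} (hw : Integrable w)
    (h0 : ContinuousAt w 0) :
    Tendsto (fun n : ℕ => ∫ x, cosTransform w x *
        rexp (-(1 / ((n : ℝ) + 1)) * (‖x‖ ^ 2 / (4 * π ^ 2))))
      atTop (𝓝 ((2 * π) ^ (finrank ℝ V : ℝ) * w 0)) := by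
  refine (((tendsto_integral_gaussian_mul hw h0).comp
    (tendsto_atTop_add_const_right _ 1 tendsto_natCast_atTop_atTop)).const_mul _).congr fun n => ?_
  have hb : 0 < 1 / (4 * π ^ 2 * ((n : ℝ) + 1)) := by positivity
  have hconst : (π / (1 / (4 * π ^ 2 * ((n : ℝ) + 1)))) ^ (finrank ℝ V / 2 : ℝ) =
      (2 * π) ^ (finrank ℝ V : ℝ) * (π * (n + 1)) ^ (finrank ℝ V / 2 : ℝ) := by
    rw [show π / (1 / (4 * π ^ 2 * ((n : ℝ) + 1))) = (2 * π) ^ (2 : ℝ) * (π * (n + 1)) by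
      rw [rpow_two, one_div, div_inv_eq_mul]; ring, mul_rpow (by positivity) (by positivity),
      ← rpow_mul (by positivity), mul_div_cancel₀ _ two_ne_zero]
  have hparseval := integral_cosTransform_mul hw (integrable_exp_neg_mul_sq_norm (V := V) hb)
  simp_rw [cosTransform_exp_neg_mul_sq_norm hb, hconst] at hparseval
  rw [Function.comp_apply, ← integral_const_mul]
  have hexponent (r : ℝ) :
      -(r / (4 * (1 / (4 * π ^ 2 * ((n : ℝ) + 1))))) = -π ^ 2 * (n + 1) * r := by
    field_simp
  convert! hparseval.symm using 3
  · rw [hexponent]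
    ring
  · congr 2
    field_simp

theorem HasNonnegCosTransform.integrable_cosTransform {w : V → ℝ} (hw : HasNonnegCosTransform w)
    (h0 : ContinuousAt w 0) : Integrable (cosTransform w) := by
  refine integrable_of_tendsto_integral (fun n => ?_) (fun n x => ?_)
    (fun x => by simpa using
      (tendsto_exp_neg_one_div_mul (‖x‖ ^ 2 / (4 * π ^ 2))).const_mul (cosTransform w x))
    (tendsto_integral_cosTransform_mul_gaussian hw.integrable h0)
  · have hgauss :
        Integrable fun x : V => rexp (-(1 / ((n : ℝ) + 1)) * (‖x‖ ^ 2 / (4 * π ^ 2))) := by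
      convert! integrable_exp_neg_mul_sq_norm (V := V)
        (b := 1 / ((n : ℝ) + 1) / (4 * π ^ 2)) (by positivity) using 3
      ring
    exact hgauss.bdd_mul (continuous_cosTransform hw.integrable).aestronglyMeasurable
      (ae_of_all _ (norm_cosTransform_le hw.integrable))
  · exact mul_nonneg (hw.nonneg x) (exp_pos _).le

theorem HasNonnegCosTransform.integral_cosTransform {w : V → ℝ} (hw : HasNonnegCosTransform w)
    (h0 : ContinuousAt w 0) :
    ∫ x, cosTransform w x = (2 * π) ^ (finrank ℝ V : ℝ) * w 0 := by
  have hint := hw.integrable_cosTransform h0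
  refine tendsto_nhds_unique (tendsto_integral_of_dominated_convergence
    (F := fun (n : ℕ) x => cosTransform w x *
      rexp (-(1 / ((n : ℝ) + 1)) * (‖x‖ ^ 2 / (4 * π ^ 2)))) (cosTransform w)
    (fun n => hint.aestronglyMeasurable.mul (Continuous.aestronglyMeasurable (by fun_prop))) hint
    (fun n => ae_of_all _ fun x => ?_) (ae_of_all _ fun x => by simpa using
      (tendsto_exp_neg_one_div_mul (‖x‖ ^ 2 / (4 * π ^ 2))).const_mul (cosTransform w x)))
    (tendsto_integral_cosTransform_mul_gaussian hw.integrable h0)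
  rw [norm_of_nonneg (mul_nonneg (hw.nonneg x) (exp_pos _).le)]
  exact mul_le_of_le_one_right (hw.nonneg x) (exp_neg_one_div_mul_le_one n (by positivity))

end Inversion

section StableKernel

lemma continuous_exp_neg_mul_rpow_norm {E : Type*} [SeminormedAddCommGroup E] {α : ℝ} (hα : 0 < α)
    (t : ℝ) : Continuous fun ξ : E => rexp (-(t * ‖ξ‖ ^ α)) := by
  have := continuous_rpow_const hα.le
  fun_prop

theorem integrable_rpow_norm_mul_exp_neg_mul_rpow_norm {α q t : ℝ} (hα : 0 < α) (hq : 0 ≤ q)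
    (ht : 0 < t) : Integrable fun ξ : V => ‖ξ‖ ^ q * rexp (-(t * ‖ξ‖ ^ α)) := by
  rcases subsingleton_or_nontrivial V with _ | _
  · rw [show (fun ξ : V => ‖ξ‖ ^ q * rexp (-(t * ‖ξ‖ ^ α))) =
      fun _ => ‖(0 : V)‖ ^ q * rexp (-(t * ‖(0 : V)‖ ^ α)) from
        funext fun ξ => by rw [Subsingleton.elim ξ 0]]
    exact integrable_const _
  · refine (integrable_fun_norm_addHaar (volume : Measure V)
      (f := fun r => r ^ q * rexp (-(t * r ^ α)))).2 ?_
    refine (integrableOn_rpow_mul_exp_neg_mul_rpow (p := α) (b := t)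
      (s := (finrank ℝ V - 1 : ℕ) + q) (by linarith [Nat.cast_nonneg (α := ℝ) (finrank ℝ V - 1)])
      hα ht).congr_fun (fun r (hr : 0 < r) => ?_) measurableSet_Ioi
    simp only [rpow_add hr, rpow_natCast, smul_eq_mul, mul_assoc, neg_mul]

theorem integrable_exp_neg_mul_rpow_norm {α t : ℝ} (hα : 0 < α) (ht : 0 < t) :
    Integrable fun ξ : V => rexp (-(t * ‖ξ‖ ^ α)) := by
  simpa using integrable_rpow_norm_mul_exp_neg_mul_rpow_norm (V := V) hα le_rfl ht

theorem hasNonnegCosTransform_exp_neg_mul_rpow_norm {α t : ℝ} (hα0 : 0 < α) (hα2 : α < 2)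
    (ht : 0 < t) : HasNonnegCosTransform fun ξ : V => rexp (-(t * ‖ξ‖ ^ α)) := by
  have hsymbol (ξ : V) : levySymbol (fun y => t * stableDensity α y) ξ = t * ‖ξ‖ ^ α := by
    rw [levySymbol_const_mul, levySymbol_stableDensity hα0 hα2]
  simp_rw [← hsymbol]
  refine hasNonnegCosTransform_exp_neg_levySymbol
    ((isLevyDensity_stableDensity hα0 hα2).const_mul ht.le) ?_
  simpa only [hsymbol] using integrable_exp_neg_mul_rpow_norm hα0 ht

theorem cosTransform_comp_smul (f : V → ℝ) {r : ℝ} (hr : 0 < r) (x : V) :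
    cosTransform (fun ξ => f (r • ξ)) x = (r ^ finrank ℝ V)⁻¹ * cosTransform f (r⁻¹ • x) := by
  have hscale := Measure.integral_comp_smul volume (fun ξ : V => f ξ * cos ⟪r⁻¹ • x, ξ⟫) r
  rw [abs_of_pos (by positivity), smul_eq_mul] at hscale
  rw [cosTransform, cosTransform, ← hscale]
  simp only [real_inner_smul_left, real_inner_smul_right, mul_inv_cancel_left₀ hr.ne']

/-- The heat kernel of the fractional Laplacian of order `α` on a Euclidean space. -/
noncomputable def stableKernel (α t : ℝ) (x : V) : ℝ :=
  (2 * π) ^ (-(finrank ℝ V : ℝ)) * cosTransform (fun ξ : V => rexp (-(t * ‖ξ‖ ^ α))) x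

variable {α t : ℝ}

theorem stableKernel_nonneg (hα0 : 0 < α) (hα2 : α < 2) (ht : 0 < t) (x : V) :
    0 ≤ stableKernel α t x :=
  mul_nonneg (by positivity) ((hasNonnegCosTransform_exp_neg_mul_rpow_norm hα0 hα2 ht).nonneg x)

theorem integrable_stableKernel (hα0 : 0 < α) (hα2 : α < 2) (ht : 0 < t) :
    Integrable (stableKernel (V := V) α t) :=
  ((hasNonnegCosTransform_exp_neg_mul_rpow_norm hα0 hα2 ht).integrable_cosTransform
    (continuous_exp_neg_mul_rpow_norm (E := V) hα0 t).continuousAt).const_mul _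

theorem integral_stableKernel (hα0 : 0 < α) (hα2 : α < 2) (ht : 0 < t) :
    ∫ x : V, stableKernel α t x = 1 := by
  simp_rw [stableKernel]
  rw [integral_const_mul,
    (hasNonnegCosTransform_exp_neg_mul_rpow_norm hα0 hα2 ht).integral_cosTransform
      (continuous_exp_neg_mul_rpow_norm (E := V) hα0 t).continuousAt, ← mul_assoc,
    ← rpow_add (by positivity)]
  simp [zero_rpow hα0.ne']

theorem measurable_stableKernel (α : ℝ) :
    Measurable fun p : ℝ × V => stableKernel α p.1 p.2 := by
  have hintegrand : Measurable fun q : (ℝ × V) × V =>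
      rexp (-(q.1.1 * ‖q.2‖ ^ α)) * cos ⟪q.1.2, q.2⟫ := by fun_prop
  unfold stableKernel cosTransform
  exact (hintegrand.stronglyMeasurable.integral_prod_right').measurable.const_mul _

theorem integral_stableKernel_mul (hα0 : 0 < α) (ht : 0 < t) {g : V → ℝ} (hg : Integrable g) :
    ∫ z, stableKernel α t z * g z =
      (2 * π) ^ (-(finrank ℝ V : ℝ)) * ∫ ξ, rexp (-(t * ‖ξ‖ ^ α)) * cosTransform g ξ := by
  simp_rw [stableKernel, mul_assoc]
  rw [integral_const_mul, integral_cosTransform_mul (integrable_exp_neg_mul_rpow_norm hα0 ht) hg]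

theorem stableKernel_eq_scaled (hα0 : 0 < α) (ht : 0 < t) (x : V) :
    stableKernel α t x = ((t ^ (1 / α)) ^ finrank ℝ V)⁻¹ *
      stableKernel α 1 ((t ^ (1 / α))⁻¹ • x) := by
  have hpow (ξ : V) : t * ‖ξ‖ ^ α = 1 * ‖t ^ (1 / α) • ξ‖ ^ α := by
    rw [norm_smul, norm_of_nonneg (by positivity), mul_rpow (by positivity) (norm_nonneg ξ),
      ← rpow_mul ht.le, one_div_mul_cancel hα0.ne', rpow_one, one_mul]
  simp_rw [stableKernel, hpow]
  rw [cosTransform_comp_smul (fun ξ : V => rexp (-(1 * ‖ξ‖ ^ α))) (by positivity)]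
  ring

theorem integral_stableKernel_mul_eq_scaled (hα0 : 0 < α) (ht : 0 < t) (g : V → ℝ) :
    ∫ z, stableKernel α t z * g z = ∫ w, stableKernel α 1 w * g (t ^ (1 / α) • w) := by
  have hr : 0 < t ^ (1 / α) := by positivity
  have hscale := Measure.integral_comp_smul volume
    (fun z : V => stableKernel α 1 ((t ^ (1 / α))⁻¹ • z) * g z) (t ^ (1 / α))
  rw [abs_of_pos (by positivity), smul_eq_mul, ← integral_const_mul] at hscale
  simpa only [stableKernel_eq_scaled hα0 ht, mul_assoc, inv_smul_smul₀ hr.ne'] using hscale.symm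

end StableKernel

section SecondDifference

variable {E : Type*} [NormedAddCommGroup E]

/-- The symmetric second difference of `f` at `z` with increment `y`. -/
def secondDiff (f : E → ℝ) (z y : E) : ℝ :=
  f (z + y) + f (z - y) - 2 * f z

lemma abs_secondDiff_le_four_mul {f : E → ℝ} {K : ℝ} (hK : ∀ z, ‖f z‖ ≤ K) (z y : E) :
    |secondDiff f z y| ≤ 4 * K := by
  have hplus := abs_le.1 (hK (z + y))
  have hminus := abs_le.1 (hK (z - y))
  have hz := abs_le.1 (hK z)
  exact abs_le.2 ⟨by unfold secondDiff; linarith, by unfold secondDiff; linarith⟩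

variable [NormedSpace ℝ E]

lemma abs_secondDiff_le_mul_sq_norm {f : E → ℝ} (hf : Differentiable ℝ f) {C : NNReal}
    (hC : LipschitzWith C (fderiv ℝ f)) (z y : E) : |secondDiff f z y| ≤ C * ‖y‖ ^ 2 := by
  have hderiv (w : E) :
      HasFDerivAt (fun w => f (w + y) - f w) (fderiv ℝ f (w + y) - fderiv ℝ f w) w :=
    ((hf (w + y)).hasFDerivAt.comp w ((hasFDerivAt_id w).add_const y)).sub (hf w).hasFDerivAt
  have hbound (w : E) : ‖fderiv ℝ f (w + y) - fderiv ℝ f w‖ ≤ C * ‖y‖ := by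
    simpa using hC.norm_sub_le (w + y) w
  calc |secondDiff f z y| = ‖f (z + y) - f z - (f (z - y + y) - f (z - y))‖ := by
        rw [sub_add_cancel, norm_eq_abs, secondDiff]
        ring_nf
    _ ≤ C * ‖y‖ * ‖z - (z - y)‖ :=
        convex_univ.norm_image_sub_le_of_norm_hasFDerivWithin_le
          (fun w _ => (hderiv w).hasFDerivWithinAt) (fun w _ => hbound w) (Set.mem_univ _)
          (Set.mem_univ _)
    _ = C * ‖y‖ ^ 2 := by
        rw [sub_sub_cancel]
        ring

theorem exists_abs_secondDiff_le {f : E → ℝ} (hf : ContDiff ℝ 2 f) (hfc : HasCompactSupport f) :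
    ∃ M, ∀ z y, |secondDiff f z y| ≤ M * min 1 (‖y‖ ^ 2) := by
  obtain ⟨K, hK⟩ := hfc.exists_bound_of_continuous hf.continuous
  obtain ⟨C, hC⟩ := ((hf.fderiv_right (m := 1) le_rfl).lipschitzWith_of_hasCompactSupport
    (hfc.fderiv ℝ) one_ne_zero)
  refine ⟨max (4 * K) C, fun z y => ?_⟩
  have hmax : 0 ≤ max (4 * K) C := le_max_of_le_right C.2
  rw [mul_min_of_nonneg _ _ hmax, mul_one]
  refine le_min ((abs_secondDiff_le_four_mul hK z y).trans (le_max_left _ _))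
    ((abs_secondDiff_le_mul_sq_norm (hf.differentiable two_ne_zero) hC z y).trans ?_)
  gcongr
  exact le_max_right _ _

end SecondDifference

section LevyOperator

variable {k f : V → ℝ} {K M : ℝ}

/-- The generator of the symmetric pure-jump Lévy process with (even) Lévy density `k`. Second
differences make the integral absolutely convergent, so that no principal value is needed. -/
noncomputable def levyOperator (k f : V → ℝ) (z : V) : ℝ :=
  (∫ y, secondDiff f z y * k y) / 2

lemma norm_secondDiff_mul_le (hk : IsLevyDensity k)
    (hM : ∀ z y, |secondDiff f z y| ≤ M * min 1 (‖y‖ ^ 2)) (z y : V) :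
    ‖secondDiff f z y * k y‖ ≤ M * (min 1 (‖y‖ ^ 2) * k y) := by
  rw [norm_mul, norm_of_nonneg (hk.nonneg y), ← mul_assoc]
  exact mul_le_mul_of_nonneg_right (hM z y) (hk.nonneg y)

lemma integrable_secondDiff_mul (hk : IsLevyDensity k) (hf : Measurable f)
    (hM : ∀ z y, |secondDiff f z y| ≤ M * min 1 (‖y‖ ^ 2)) (z : V) :
    Integrable fun y => secondDiff f z y * k y := by
  have hkm := hk.measurable
  exact (hk.integrable.const_mul M).mono'
    (Measurable.aestronglyMeasurable (by unfold secondDiff; fun_prop))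
    (ae_of_all _ (norm_secondDiff_mul_le hk hM z))

theorem abs_levyOperator_le (hk : IsLevyDensity k)
    (hM : ∀ z y, |secondDiff f z y| ≤ M * min 1 (‖y‖ ^ 2)) (z : V) :
    |levyOperator k f z| ≤ (∫ y, M * (min 1 (‖y‖ ^ 2) * k y)) / 2 := by
  rw [levyOperator, abs_div, abs_two]
  gcongr
  exact norm_integral_le_of_norm_le (hk.integrable.const_mul M)
    (ae_of_all _ (norm_secondDiff_mul_le hk hM z))

lemma cosTransform_comp_add_right (f : V → ℝ) (a ξ : V) :
    cosTransform (fun z => f (z + a)) ξ = ∫ z, f z * cos (⟪ξ, z⟫ - ⟪ξ, a⟫) := by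
  rw [← integral_add_right_eq_self (fun z => f z * cos (⟪ξ, z⟫ - ⟪ξ, a⟫)) a]
  simp only [cosTransform, inner_add_right, add_sub_cancel_right]

theorem cosTransform_secondDiff (hf : Integrable f) (y ξ : V) :
    cosTransform (fun z => secondDiff f z y) ξ = -(2 * (1 - cos ⟪ξ, y⟫) * cosTransform f ξ) := by
  have hshift (c : ℝ) : Integrable fun z => f z * cos (⟪ξ, z⟫ - c) :=
    integrable_mul_cos hf (by fun_prop)
  have hpoint (z : V) : f z * cos (⟪ξ, z⟫ - ⟪ξ, y⟫) + f z * cos (⟪ξ, z⟫ - ⟪ξ, -y⟫) =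
      2 * cos ⟪ξ, y⟫ * (f z * cos ⟪ξ, z⟫) := by
    rw [inner_neg_right, sub_neg_eq_add, cos_add, cos_sub]
    ring
  calc cosTransform (fun z => secondDiff f z y) ξ
      = cosTransform (fun z => f (z + y)) ξ + cosTransform (fun z => f (z + -y)) ξ +
          -2 * cosTransform f ξ := by
        simp only [secondDiff, sub_eq_add_neg, ← neg_mul]
        rw [cosTransform_add (f := fun z => f (z + y) + f (z + -y))
          ((hf.comp_add_right y).add (hf.comp_add_right (-y))) (hf.const_mul (-2)),
          cosTransform_add (hf.comp_add_right y) (hf.comp_add_right (-y)), cosTransform_const_mul]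
    _ = 2 * cos ⟪ξ, y⟫ * cosTransform f ξ + -2 * cosTransform f ξ := by
        rw [cosTransform_comp_add_right, cosTransform_comp_add_right,
          ← integral_add (hshift _) (hshift _)]
        simp only [hpoint, integral_const_mul, cosTransform]
    _ = -(2 * (1 - cos ⟪ξ, y⟫) * cosTransform f ξ) := by ring

lemma integral_cosTransform_mul_secondDiff {w : V → ℝ} (hw : Integrable w) (hf : Integrable f)
    (y : V) :
    ∫ z, cosTransform w z * secondDiff f z y =
      ∫ ξ, w ξ * -(2 * (1 - cos ⟪ξ, y⟫) * cosTransform f ξ) := by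
  have hdiff : Integrable fun z => secondDiff f z y :=
    ((hf.comp_add_right y).add (hf.comp_sub_right y)).sub (hf.const_mul 2)
  simp_rw [integral_cosTransform_mul hw hdiff, cosTransform_secondDiff hf]

lemma integrable_prod_mul_one_sub_cos_mul {w : V → ℝ} (hw : Measurable w) (hk : IsLevyDensity k)
    (hwk : Integrable fun ξ => w ξ * levySymbol k ξ) :
    Integrable fun p : V × V => w p.1 * ((1 - cos ⟪p.1, p.2⟫) * k p.2) := by
  have hkm := hk.measurable
  have habs : Integrable fun p : V × V => |w p.1| * ((1 - cos ⟪p.1, p.2⟫) * k p.2) := by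
    refine integrable_prod_of_nonneg (g := fun ξ => |w ξ| * levySymbol k ξ)
      (Measurable.aestronglyMeasurable (by fun_prop))
      (ae_of_all _ fun ξ => ae_of_all _ fun y => mul_nonneg (abs_nonneg _)
        (mul_nonneg (one_sub_cos_inner_nonneg ξ y) (hk.nonneg y)))
      (ae_of_all _ fun ξ => (hk.integrable_one_sub_cos_mul ξ).const_mul (|w ξ|))
      (ae_of_all _ fun ξ => integral_const_mul (|w ξ|) _) (hwk.norm.congr (ae_of_all _ fun ξ => ?_))
    simp only [norm_mul, norm_eq_abs, abs_of_nonneg (hk.levySymbol_nonneg ξ)]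
  refine habs.mono (Measurable.aestronglyMeasurable (by fun_prop)) (ae_of_all _ fun p => ?_)
  simp

theorem integral_cosTransform_mul_levyOperator {w : V → ℝ} (hwm : Measurable w)
    (hw : Integrable w) (hwT : Integrable (cosTransform w)) (hk : IsLevyDensity k)
    (hwk : Integrable fun ξ => w ξ * levySymbol k ξ) (hfm : Measurable f) (hf : Integrable f)
    (hM : ∀ z y, |secondDiff f z y| ≤ M * min 1 (‖y‖ ^ 2)) :
    ∫ z, cosTransform w z * levyOperator k f z =
      ∫ ξ, w ξ * (-levySymbol k ξ * cosTransform f ξ) := by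
  have hkm := hk.measurable
  have hzy : Integrable fun p : V × V => cosTransform w p.1 * (secondDiff f p.1 p.2 * k p.2) := by
    refine (hwT.mul_prod (hk.integrable.const_mul M)).mono
      (hwT.aestronglyMeasurable.comp_fst.mul
        (Measurable.aestronglyMeasurable (by unfold secondDiff; fun_prop)))
      (ae_of_all _ fun p => ?_)
    simp only [norm_mul (cosTransform w _)]
    exact mul_le_mul_of_nonneg_left
      ((norm_secondDiff_mul_le hk hM p.1 p.2).trans (le_abs_self _)) (norm_nonneg _)
  have hξy : Integrable fun p : V × V =>
      w p.1 * ((1 - cos ⟪p.1, p.2⟫) * k p.2) * cosTransform f p.1 :=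
    (integrable_prod_mul_one_sub_cos_mul hwm hk hwk).mul_bdd
      ((continuous_cosTransform hf).comp continuous_fst).aestronglyMeasurable
      (ae_of_all _ fun p => norm_cosTransform_le hf p.1)
  calc ∫ z, cosTransform w z * levyOperator k f z
      = (∫ z, ∫ y, cosTransform w z * (secondDiff f z y * k y)) / 2 := by
        simp only [levyOperator, integral_const_mul, ← integral_div, mul_div_assoc]
    _ = (∫ y, (∫ z, cosTransform w z * secondDiff f z y) * k y) / 2 := by
        rw [integral_integral_swap hzy]
        simp only [← integral_mul_const, mul_assoc]
    _ = -∫ y, ∫ ξ, w ξ * ((1 - cos ⟪ξ, y⟫) * k y) * cosTransform f ξ := by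
        simp only [integral_cosTransform_mul_secondDiff hw hf, ← integral_mul_const,
          ← integral_div, ← integral_neg]
        congr! 4; ring
    _ = ∫ ξ, w ξ * (-levySymbol k ξ * cosTransform f ξ) := by
        rw [← integral_integral_swap hξy, ← integral_neg]
        simp only [integral_mul_const, integral_const_mul, levySymbol]
        congr! 2; ring

lemma IsLevyDensity.integrableOn_lt_norm (hk : IsLevyDensity k) {ε : ℝ} (hε : 0 < ε) :
    IntegrableOn k {y | ε < ‖y‖} := by
  refine (hk.integrable.const_mul (min 1 (ε ^ 2))⁻¹).integrableOn.mono'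
    hk.measurable.aestronglyMeasurable
    ((ae_restrict_mem (measurableSet_lt measurable_const measurable_norm)).mono
      fun y (hy : ε < ‖y‖) => ?_)
  rw [norm_of_nonneg (hk.nonneg y), ← mul_assoc]
  refine le_mul_of_one_le_left (hk.nonneg y) ((one_le_inv_mul₀ (by positivity)).2 ?_)
  gcongr

lemma integrableOn_sub_mul_lt_norm (hk : IsLevyDensity k) (hf : Measurable f)
    (hK : ∀ z, ‖f z‖ ≤ K) (z : V) {ε : ℝ} (hε : 0 < ε) :
    IntegrableOn (fun y => (f (z + y) - f z) * k y) {y | ε < ‖y‖} :=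
  (hk.integrableOn_lt_norm hε).bdd_mul (c := K + K)
    (Measurable.aestronglyMeasurable (by fun_prop))
    (ae_of_all _ fun y => (norm_sub_le _ _).trans (add_le_add (hK _) (hK _)))

lemma setIntegral_sub_mul_eq_secondDiff (hk : IsLevyDensity k) (heven : ∀ y, k (-y) = k y)
    (hf : Measurable f) (hK : ∀ z, ‖f z‖ ≤ K) (z : V) {ε : ℝ} (hε : 0 < ε) :
    ∫ y in {y | ε < ‖y‖}, (f (z + y) - f z) * k y =
      (∫ y in {y | ε < ‖y‖}, secondDiff f z y * k y) / 2 := by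
  have hneg : MeasurePreserving (Neg.neg : V → V) := Measure.measurePreserving_neg volume
  have hemb : MeasurableEmbedding (Neg.neg : V → V) := (MeasurableEquiv.neg V).measurableEmbedding
  have hset : (Neg.neg : V → V) ⁻¹' {y | ε < ‖y‖} = {y | ε < ‖y‖} := by
    ext y
    simp
  have hint := integrableOn_sub_mul_lt_norm hk hf hK z hε
  have hreflect := hneg.setIntegral_preimage_emb hemb (fun y => (f (z + y) - f z) * k y)
    {y | ε < ‖y‖}
  have hint' : IntegrableOn (fun y => (f (z + -y) - f z) * k (-y)) {y | ε < ‖y‖} := by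
    have h := (hneg.integrableOn_comp_preimage hemb).2 hint
    rwa [hset] at h
  rw [hset] at hreflect
  have hsplit (y : V) : secondDiff f z y * k y =
      (f (z + y) - f z) * k y + (f (z + -y) - f z) * k (-y) := by
    rw [secondDiff, heven, sub_eq_add_neg z y]
    ring
  simp_rw [hsplit]
  rw [integral_add hint hint', hreflect, add_self_div_two]

theorem tendsto_setIntegral_levyOperator (hk : IsLevyDensity k) (heven : ∀ y, k (-y) = k y)
    (hf : Measurable f) (hK : ∀ z, ‖f z‖ ≤ K)
    (hM : ∀ z y, |secondDiff f z y| ≤ M * min 1 (‖y‖ ^ 2)) (z : V) :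
    Tendsto (fun ε : ℝ => ∫ y in {y | ε < ‖y‖}, (f (z + y) - f z) * k y) (𝓝[>] 0)
      (𝓝 (levyOperator k f z)) := by
  have hint := integrable_secondDiff_mul hk hf hM z
  have hmeas (ε : ℝ) : MeasurableSet {y : V | ε < ‖y‖} :=
    measurableSet_lt measurable_const measurable_norm
  have hlim : Tendsto (fun ε : ℝ => ∫ y in {y | ε < ‖y‖}, secondDiff f z y * k y) (𝓝[>] 0)
      (𝓝 (∫ y, secondDiff f z y * k y)) := by
    simp_rw [← integral_indicator (hmeas _)]
    refine tendsto_integral_filter_of_dominated_convergence (fun y => ‖secondDiff f z y * k y‖)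
      (Eventually.of_forall fun ε => (hint.indicator (hmeas ε)).aestronglyMeasurable)
      (Eventually.of_forall fun ε => ae_of_all _ fun y => norm_indicator_le_norm_self _ y)
      hint.norm (ae_of_all _ fun y => ?_)
    rcases eq_or_ne y 0 with rfl | hy
    · simp [Set.indicator, secondDiff, two_mul]
    · refine tendsto_const_nhds.congr' ?_
      filter_upwards [nhdsWithin_le_nhds (gt_mem_nhds (norm_pos_iff.2 hy))] with ε hε
      rw [Set.indicator_of_mem (by exact hε)]
  exact (hlim.div_const 2).congr' (eventually_mem_nhdsWithin.mono fun ε hε =>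
    (setIntegral_sub_mul_eq_secondDiff hk heven hf hK z hε).symm)

end LevyOperator

theorem exists_integrable_slice_bound {X Y : Type*} [TopologicalSpace X] [TopologicalSpace Y]
    [T2Space Y] [MeasurableSpace Y] [OpensMeasurableSpace Y] (μ : Measure Y)
    [IsFiniteMeasureOnCompacts μ] {g : X × Y → ℝ} (hg : Continuous g) (hgc : HasCompactSupport g) :
    ∃ b : Y → ℝ, Integrable b μ ∧ ∀ x y, ‖g (x, y)‖ ≤ b y := by
  obtain ⟨K, hK⟩ := hgc.exists_bound_of_continuous hg
  have hcompact : IsCompact (Prod.snd '' tsupport g) := hgc.isCompact.image continuous_snd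
  refine ⟨(Prod.snd '' tsupport g).indicator fun _ => K,
    (integrable_indicator_iff hcompact.measurableSet).2
      (integrableOn_const hcompact.measure_lt_top.ne), fun x y => ?_⟩
  by_cases hy : y ∈ Prod.snd '' tsupport g
  · rw [Set.indicator_of_mem hy]
    exact hK _
  · have hzero : g (x, y) = 0 :=
      image_eq_zero_of_notMem_tsupport fun hxy => hy (Set.mem_image_of_mem Prod.snd hxy)
    rw [Set.indicator_of_notMem hy, hzero, norm_zero]

lemma exists_forall_lt_notMem_tsupport {E : Type*} [NormedAddCommGroup E] {φ : ℝ × E → ℝ}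
    (hφc : HasCompactSupport φ) :
    ∃ T, 0 < T ∧ ∀ u, T < u → ∀ z, (u, z) ∉ tsupport φ := by
  obtain ⟨T, hT0, hT⟩ := hφc.isCompact.isBounded.subset_closedBall_lt 0 0
  refine ⟨T, hT0, fun u hu z hz => hu.not_ge ?_⟩
  exact ((le_abs_self u).trans (norm_fst_le (u, z))).trans (mem_closedBall_zero_iff.1 (hT hz))

section Slices

variable {E : Type*} [NormedAddCommGroup E] [NormedSpace ℝ E] {φ : ℝ × E → ℝ}

lemma exists_abs_secondDiff_slice_le (hφ : ContDiff ℝ 2 φ) (hφc : HasCompactSupport φ) :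
    ∃ M, ∀ u z y, |secondDiff (fun z => φ (u, z)) z y| ≤ M * min 1 (‖y‖ ^ 2) := by
  obtain ⟨M, hM⟩ := exists_abs_secondDiff_le hφ hφc
  refine ⟨M, fun u z y => ?_⟩
  simpa [secondDiff] using hM (u, z) (0, y)

lemma continuous_fderiv_time (hφ : ContDiff ℝ 1 φ) :
    Continuous fun p => fderiv ℝ φ p (1, 0) :=
  (hφ.continuous_fderiv one_ne_zero).clm_apply continuous_const

lemma hasDerivAt_time (hφ : ContDiff ℝ 1 φ) (u : ℝ) (z : E) :
    HasDerivAt (fun v => φ (v, z)) (fderiv ℝ φ (u, z) (1, 0)) u :=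
  ((hφ.differentiable one_ne_zero (u, z)).hasFDerivAt).comp_hasDerivAt u
    ((hasDerivAt_id u).prodMk (hasDerivAt_const u z))

end Slices

section SpaceTime

variable {k : V → ℝ} {φ : ℝ × V → ℝ}

/-- The backward heat operator `∂_u + L` on space-time, where `L` is the Lévy operator with
density `k` acting in the space variable. -/
noncomputable def heatOperator (k : V → ℝ) (φ : ℝ × V → ℝ) (p : ℝ × V) : ℝ :=
  fderiv ℝ φ p (1, 0) + levyOperator k (fun z => φ (p.1, z)) p.2

lemma measurable_levyOperator_slice (hk : Measurable k) (hφ : Measurable φ) :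
    Measurable fun p : ℝ × V => levyOperator k (fun z => φ (p.1, z)) p.2 := by
  have hintegrand : Measurable fun q : (ℝ × V) × V =>
      secondDiff (fun z => φ (q.1.1, z)) q.1.2 q.2 * k q.2 := by
    unfold secondDiff
    fun_prop
  exact (hintegrand.stronglyMeasurable.integral_prod_right').measurable.div_const 2

lemma measurable_heatOperator (hk : Measurable k) (hφ : ContDiff ℝ 1 φ) :
    Measurable (heatOperator k φ) :=
  (continuous_fderiv_time hφ).measurable.add
    (measurable_levyOperator_slice hk hφ.continuous.measurable)

lemma exists_abs_levyOperator_slice_le (hk : IsLevyDensity k) (hφ : ContDiff ℝ 2 φ)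
    (hφc : HasCompactSupport φ) :
    ∃ B, ∀ u z, |levyOperator k (fun z => φ (u, z)) z| ≤ B := by
  obtain ⟨M, hM⟩ := exists_abs_secondDiff_slice_le hφ hφc
  exact ⟨_, fun u z => abs_levyOperator_le hk (hM u) z⟩

lemma exists_abs_heatOperator_le (hk : IsLevyDensity k) (hφ : ContDiff ℝ 2 φ)
    (hφc : HasCompactSupport φ) : ∃ B, ∀ p, |heatOperator k φ p| ≤ B := by
  obtain ⟨B, hB⟩ := exists_abs_levyOperator_slice_le hk hφ hφc
  obtain ⟨D, hD⟩ := (hφc.fderiv_apply ℝ (1, 0)).exists_bound_of_continuous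
    (continuous_fderiv_time (hφ.of_le one_le_two))
  exact ⟨D + B, fun p => (abs_add_le _ _).trans (add_le_add (hD p) (hB p.1 p.2))⟩

lemma heatOperator_eq_zero {u : ℝ} (hu : ∀ z, (u, z) ∉ tsupport φ) (z : V) :
    heatOperator k φ (u, z) = 0 := by
  have hφ0 (w : V) : φ (u, w) = 0 := image_eq_zero_of_notMem_tsupport (hu w)
  have hderiv : fderiv ℝ φ (u, z) = 0 :=
    image_eq_zero_of_notMem_tsupport fun h => hu z (tsupport_fderiv_subset ℝ h)
  simp [heatOperator, hderiv, levyOperator, secondDiff, hφ0]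

lemma heatOperator_comp_add_right (k : V → ℝ) (φ : ℝ × V → ℝ) (a p : ℝ × V) :
    heatOperator k (fun q => φ (q + a)) p = heatOperator k φ (p + a) := by
  have hdiff (y : V) : secondDiff (fun z => φ ((p.1, z) + a)) p.2 y =
      secondDiff (fun z => φ ((p + a).1, z)) (p + a).2 y := by
    obtain ⟨b, c⟩ := a
    simp only [secondDiff, Prod.mk_add_mk, Prod.fst_add, Prod.snd_add, add_right_comm p.2,
      ← sub_add_eq_add_sub]
  simp only [heatOperator, fderiv_comp_add_right, levyOperator, hdiff]

end SpaceTime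

section HeatEquation

variable {α t : ℝ} {φ : ℝ × V → ℝ}

lemma integrable_slice {g : ℝ × V → ℝ} (hg : Continuous g) (hgc : HasCompactSupport g) (u : ℝ) :
    Integrable fun z => g (u, z) := by
  obtain ⟨b, hb, hgb⟩ := exists_integrable_slice_bound volume hg hgc
  exact hb.mono' (Continuous.aestronglyMeasurable (by fun_prop)) (ae_of_all _ (hgb u))

lemma exists_norm_cosTransform_slice_le {g : ℝ × V → ℝ} (hg : Continuous g)
    (hgc : HasCompactSupport g) :
    ∃ A, ∀ u ξ, ‖cosTransform (fun z => g (u, z)) ξ‖ ≤ A := by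
  obtain ⟨b, hb, hgb⟩ := exists_integrable_slice_bound volume hg hgc
  exact ⟨∫ z, b z, fun u ξ => (norm_cosTransform_le (integrable_slice hg hgc u) ξ).trans
    (integral_mono (integrable_slice hg hgc u).norm hb (hgb u))⟩

lemma hasDerivAt_cosTransform_slice (hφ : ContDiff ℝ 1 φ) (hφc : HasCompactSupport φ) (ξ : V)
    (u : ℝ) :
    HasDerivAt (fun v => cosTransform (fun z => φ (v, z)) ξ)
      (cosTransform (fun z => fderiv ℝ φ (u, z) (1, 0)) ξ) u := by
  have hφ' := continuous_fderiv_time hφ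
  have hφ'c := hφc.fderiv_apply ℝ (1, 0)
  obtain ⟨b, hb, hφb⟩ := exists_integrable_slice_bound volume hφ' hφ'c
  refine (hasDerivAt_integral_of_dominated_loc_of_deriv_le univ_mem (bound := b)
    (Eventually.of_forall fun v =>
      (integrable_mul_cos_inner (integrable_slice hφ.continuous hφc v) ξ).aestronglyMeasurable)
    (integrable_mul_cos_inner (integrable_slice hφ.continuous hφc u) ξ)
    (integrable_mul_cos_inner (integrable_slice hφ' hφ'c u) ξ).aestronglyMeasurable
    (ae_of_all _ fun z v _ => ?_) hb
    (ae_of_all _ fun z v _ => (hasDerivAt_time hφ v z).mul_const _)).2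
  rw [norm_mul]
  exact (mul_le_of_le_one_right (norm_nonneg _) (abs_cos_le_one _)).trans (hφb v z)

lemma integrable_stableKernel_mul (hα0 : 0 < α) (hα2 : α < 2) (ht : 0 < t) {g : V → ℝ}
    (hg : Measurable g) {C : ℝ} (hC : ∀ z, |g z| ≤ C) :
    Integrable fun z => stableKernel α t z * g z :=
  (integrable_stableKernel hα0 hα2 ht).mul_bdd hg.aestronglyMeasurable (ae_of_all _ hC)

theorem integral_stableKernel_mul_levyOperator (hα0 : 0 < α) (hα2 : α < 2) (ht : 0 < t)
    {f : V → ℝ} (hfm : Measurable f) (hf : Integrable f) {M : ℝ}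
    (hM : ∀ z y, |secondDiff f z y| ≤ M * min 1 (‖y‖ ^ 2)) :
    ∫ z, stableKernel α t z * levyOperator (stableDensity α) f z = (2 * π) ^ (-(finrank ℝ V : ℝ)) *
      ∫ ξ, rexp (-(t * ‖ξ‖ ^ α)) * (-‖ξ‖ ^ α * cosTransform f ξ) := by
  have hw := hasNonnegCosTransform_exp_neg_mul_rpow_norm (V := V) hα0 hα2 ht
  have hcont := continuous_exp_neg_mul_rpow_norm (E := V) hα0 t
  have hsymbol : Integrable fun ξ : V =>
      rexp (-(t * ‖ξ‖ ^ α)) * levySymbol (stableDensity α) ξ := by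
    simpa only [levySymbol_stableDensity hα0 hα2, mul_comm] using
      integrable_rpow_norm_mul_exp_neg_mul_rpow_norm (V := V) hα0 hα0.le ht
  have hparseval := integral_cosTransform_mul_levyOperator hcont.measurable hw.integrable
    (hw.integrable_cosTransform hcont.continuousAt) (isLevyDensity_stableDensity hα0 hα2)
    hsymbol hfm hf hM
  simp only [levySymbol_stableDensity hα0 hα2] at hparseval
  simp only [stableKernel, mul_assoc, integral_const_mul, hparseval]

lemma integrable_exp_mul_cosTransform (hα0 : 0 < α) (ht : 0 < t) {f : V → ℝ} (hf : Integrable f) :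
    Integrable fun ξ => rexp (-(t * ‖ξ‖ ^ α)) * cosTransform f ξ :=
  (integrable_exp_neg_mul_rpow_norm hα0 ht).mul_bdd
    (continuous_cosTransform hf).aestronglyMeasurable (ae_of_all _ (norm_cosTransform_le hf))

lemma integrable_exp_mul_rpow_norm_mul_cosTransform (hα0 : 0 < α) (ht : 0 < t) {f : V → ℝ}
    (hf : Integrable f) :
    Integrable fun ξ => rexp (-(t * ‖ξ‖ ^ α)) * (-‖ξ‖ ^ α * cosTransform f ξ) := by
  refine ((integrable_rpow_norm_mul_exp_neg_mul_rpow_norm hα0 hα0.le ht).neg.mul_bdd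
    (continuous_cosTransform hf).aestronglyMeasurable
    (ae_of_all _ (norm_cosTransform_le hf))).congr (ae_of_all _ fun ξ => ?_)
  simp only [Pi.neg_apply]
  ring

theorem integral_stableKernel_mul_heatOperator (hα0 : 0 < α) (hα2 : α < 2) (ht : 0 < t)
    (hφ : ContDiff ℝ 2 φ) (hφc : HasCompactSupport φ) (u : ℝ) :
    ∫ z, stableKernel α t z * heatOperator (stableDensity α) φ (u, z) =
      (2 * π) ^ (-(finrank ℝ V : ℝ)) * ∫ ξ, rexp (-(t * ‖ξ‖ ^ α)) *
        (cosTransform (fun z => fderiv ℝ φ (u, z) (1, 0)) ξ -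
          ‖ξ‖ ^ α * cosTransform (fun z => φ (u, z)) ξ) := by
  have hk := isLevyDensity_stableDensity (V := V) hα0 hα2
  have hφ' := continuous_fderiv_time (hφ.of_le one_le_two)
  have hφ'c := hφc.fderiv_apply ℝ (1, 0)
  have hφ0 := hφ.continuous
  have hslice := integrable_slice hφ0 hφc u
  have hslice' := integrable_slice hφ' hφ'c u
  obtain ⟨D, hD⟩ := hφ'c.exists_bound_of_continuous hφ'
  obtain ⟨B, hB⟩ := exists_abs_levyOperator_slice_le hk hφ hφc
  obtain ⟨M, hM⟩ := exists_abs_secondDiff_slice_le hφ hφc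
  have htime : Integrable fun z => stableKernel α t z * fderiv ℝ φ (u, z) (1, 0) :=
    integrable_stableKernel_mul hα0 hα2 ht (hφ'.comp (by fun_prop)).measurable fun z => hD (u, z)
  have hspace : Integrable fun z =>
      stableKernel α t z * levyOperator (stableDensity α) (fun z => φ (u, z)) z :=
    integrable_stableKernel_mul hα0 hα2 ht ((measurable_levyOperator_slice hk.measurable
      hφ.continuous.measurable).comp measurable_prodMk_left) (hB u)
  simp only [heatOperator, mul_add, integral_add htime hspace,
    integral_stableKernel_mul hα0 ht hslice',
    integral_stableKernel_mul_levyOperator hα0 hα2 ht (Continuous.measurable (by fun_prop))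
      hslice (hM u)]
  rw [← mul_add, ← integral_add
    (integrable_exp_mul_cosTransform hα0 ht hslice')
    (integrable_exp_mul_rpow_norm_mul_cosTransform hα0 ht hslice)]
  congr! 3
  ring

lemma hasDerivAt_exp_mul_cosTransform_slice (hφ : ContDiff ℝ 1 φ) (hφc : HasCompactSupport φ)
    (ξ : V) (u : ℝ) :
    HasDerivAt (fun v => rexp (-(v * ‖ξ‖ ^ α)) * cosTransform (fun z => φ (v, z)) ξ)
      (rexp (-(u * ‖ξ‖ ^ α)) * (cosTransform (fun z => fderiv ℝ φ (u, z) (1, 0)) ξ -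
        ‖ξ‖ ^ α * cosTransform (fun z => φ (u, z)) ξ)) u := by
  have hexp : HasDerivAt (fun v => rexp (-(v * ‖ξ‖ ^ α)))
      (rexp (-(u * ‖ξ‖ ^ α)) * -(1 * ‖ξ‖ ^ α)) u :=
    ((hasDerivAt_id u).mul_const _).neg.exp
  refine (hexp.mul (hasDerivAt_cosTransform_slice hφ hφc ξ u)).congr_deriv ?_
  ring

lemma norm_exp_mul_sub_le {r τ v a b A B : ℝ} (hr : 0 ≤ r) (hv : τ ≤ v) (ha : ‖a‖ ≤ A)
    (hb : ‖b‖ ≤ B) :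
    ‖rexp (-(v * r)) * (a - r * b)‖ ≤ rexp (-(τ * r)) * A + r * rexp (-(τ * r)) * B := by
  calc ‖rexp (-(v * r)) * (a - r * b)‖
      = rexp (-(v * r)) * ‖a - r * b‖ := by rw [norm_mul, norm_of_nonneg (exp_nonneg _)]
    _ ≤ rexp (-(τ * r)) * (A + r * B) := by
        gcongr
        refine (norm_sub_le _ _).trans (add_le_add ha ?_)
        rw [norm_mul, norm_of_nonneg hr]
        gcongr
    _ = _ := by ring

theorem hasDerivAt_integral_exp_mul_cosTransform_slice (hα0 : 0 < α) (hφ : ContDiff ℝ 1 φ)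
    (hφc : HasCompactSupport φ) (ht : 0 < t) :
    HasDerivAt (fun u => ∫ ξ : V, rexp (-(u * ‖ξ‖ ^ α)) * cosTransform (fun z => φ (u, z)) ξ)
      (∫ ξ : V, rexp (-(t * ‖ξ‖ ^ α)) * (cosTransform (fun z => fderiv ℝ φ (t, z) (1, 0)) ξ -
        ‖ξ‖ ^ α * cosTransform (fun z => φ (t, z)) ξ)) t := by
  have hφ' := continuous_fderiv_time hφ
  have hφ'c := hφc.fderiv_apply ℝ (1, 0)
  obtain ⟨A, hA⟩ := exists_norm_cosTransform_slice_le hφ.continuous hφc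
  obtain ⟨A', hA'⟩ := exists_norm_cosTransform_slice_le hφ' hφ'c
  have hcont (v : ℝ) := continuous_cosTransform (integrable_slice hφ.continuous hφc v)
  have hcont' (v : ℝ) := continuous_cosTransform (integrable_slice hφ' hφ'c v)
  have hexp (v : ℝ) := continuous_exp_neg_mul_rpow_norm (E := V) hα0 v
  have hrpow : Continuous fun ξ : V => ‖ξ‖ ^ α := continuous_norm.rpow_const fun _ => .inr hα0.le
  have hbound : Integrable fun ξ : V => rexp (-(t / 2 * ‖ξ‖ ^ α)) * A' +
      ‖ξ‖ ^ α * rexp (-(t / 2 * ‖ξ‖ ^ α)) * A :=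
    ((integrable_exp_neg_mul_rpow_norm hα0 (half_pos ht)).mul_const A').add
      ((integrable_rpow_norm_mul_exp_neg_mul_rpow_norm hα0 hα0.le (half_pos ht)).mul_const A)
  refine (hasDerivAt_integral_of_dominated_loc_of_deriv_le (Ioi_mem_nhds (half_lt_self ht))
    (Eventually.of_forall fun v => ((hexp v).mul (hcont v)).aestronglyMeasurable)
    (integrable_exp_mul_cosTransform hα0 ht (integrable_slice hφ.continuous hφc t))
    ((hexp t).mul ((hcont' t).sub (hrpow.mul (hcont t)))).aestronglyMeasurable
    (ae_of_all _ fun ξ v (hv : t / 2 < v) => ?_) hbound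
    (ae_of_all _ fun ξ v _ => hasDerivAt_exp_mul_cosTransform_slice hφ hφc ξ v)).2
  exact norm_exp_mul_sub_le (by positivity) hv.le (hA' v ξ) (hA v ξ)

theorem hasDerivAt_integral_stableKernel_mul (hα0 : 0 < α) (hα2 : α < 2)
    (hφ : ContDiff ℝ 2 φ) (hφc : HasCompactSupport φ) (ht : 0 < t) :
    HasDerivAt (fun u => ∫ z, stableKernel α u z * φ (u, z))
      (∫ z, stableKernel α t z * heatOperator (stableDensity α) φ (t, z)) t := by
  rw [integral_stableKernel_mul_heatOperator hα0 hα2 ht hφ hφc]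
  refine ((hasDerivAt_integral_exp_mul_cosTransform_slice hα0 (hφ.of_le one_le_two) hφc
    ht).const_mul _).congr_of_eventuallyEq ?_
  filter_upwards [Ioi_mem_nhds ht] with u hu
  exact integral_stableKernel_mul hα0 hu (integrable_slice hφ.continuous hφc u)

lemma integrableOn_stableKernel_mul_heatOperator (hα0 : 0 < α) (hα2 : α < 2)
    (hφ : ContDiff ℝ 2 φ) (hφc : HasCompactSupport φ) :
    IntegrableOn (fun p : ℝ × V => stableKernel α p.1 p.2 * heatOperator (stableDensity α) φ p)
      (Set.Ioi 0 ×ˢ Set.univ) := by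
  have hk := isLevyDensity_stableDensity (V := V) hα0 hα2
  obtain ⟨B, hB⟩ := exists_abs_heatOperator_le hk hφ hφc
  obtain ⟨T, -, hT⟩ := exists_forall_lt_notMem_tsupport hφc
  have hkernel : IntegrableOn (fun p : ℝ × V => stableKernel α p.1 p.2)
      (Set.Ioc 0 T ×ˢ Set.univ) := by
    rw [IntegrableOn, Measure.volume_eq_prod, ← Measure.prod_restrict, Measure.restrict_univ]
    exact integrable_prod_of_nonneg (g := fun _ => 1)
      (measurable_stableKernel α).aestronglyMeasurable
      ((ae_restrict_mem measurableSet_Ioc).mono fun u hu =>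
        ae_of_all _ (stableKernel_nonneg hα0 hα2 hu.1))
      ((ae_restrict_mem measurableSet_Ioc).mono fun u hu => integrable_stableKernel hα0 hα2 hu.1)
      ((ae_restrict_mem measurableSet_Ioc).mono fun u hu => integral_stableKernel hα0 hα2 hu.1)
      (integrable_const 1)
  refine IntegrableOn.of_forall_sdiff_eq_zero (hkernel.mul_bdd
    (measurable_heatOperator hk.measurable (hφ.of_le one_le_two)).aestronglyMeasurable
    (ae_of_all _ hB)) (measurableSet_Ioi.prod .univ) ?_
  rintro ⟨u, z⟩ ⟨⟨hu0, -⟩, hu⟩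
  rw [heatOperator_eq_zero (hT u (not_le.1 fun huT => hu ⟨⟨hu0, huT⟩, trivial⟩)), mul_zero]

lemma continuous_integral_stableKernel_mul_comp_smul (hα0 : 0 < α) (hα2 : α < 2)
    (hφ : Continuous φ) (hφc : HasCompactSupport φ) :
    Continuous fun u => ∫ w, stableKernel α 1 w * φ (u, u ^ (1 / α) • w) := by
  obtain ⟨C, hC⟩ := hφc.exists_bound_of_continuous hφ
  have hK := integrable_stableKernel (V := V) hα0 hα2 one_pos
  have hrpow : Continuous fun u : ℝ => u ^ (1 / α) :=
    continuous_id.rpow_const fun _ => .inr (by positivity)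
  refine continuous_of_dominated (bound := fun w => ‖stableKernel α 1 w‖ * C)
    (fun u => hK.1.mul (Continuous.aestronglyMeasurable (by fun_prop)))
    (fun u => ae_of_all _ fun w => ?_) (hK.norm.mul_const C)
    (ae_of_all _ fun w => by fun_prop)
  rw [norm_mul]
  gcongr
  exact hC _

theorem integral_Ioi_stableKernel_mul_heatOperator (hα0 : 0 < α) (hα2 : α < 2)
    (hφ : ContDiff ℝ 2 φ) (hφc : HasCompactSupport φ) :
    ∫ u in Set.Ioi 0, ∫ z : V, stableKernel α u z * heatOperator (stableDensity α) φ (u, z) =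
      -φ (0, 0) := by
  set G : ℝ → ℝ := fun u => ∫ w, stableKernel α 1 w * φ (u, u ^ (1 / α) • w) with hG
  have hcont : Continuous G :=
    continuous_integral_stableKernel_mul_comp_smul hα0 hα2 hφ.continuous hφc
  have hderiv (u : ℝ) (hu : u ∈ Set.Ioi 0) :
      HasDerivAt G (∫ z, stableKernel α u z * heatOperator (stableDensity α) φ (u, z)) u := by
    refine (hasDerivAt_integral_stableKernel_mul hα0 hα2 hφ hφc hu).congr_of_eventuallyEq ?_
    filter_upwards [Ioi_mem_nhds hu] with v hv
    exact (integral_stableKernel_mul_eq_scaled hα0 hv fun z => φ (v, z)).symm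
  have hint : IntegrableOn
      (fun u => ∫ z, stableKernel α u z * heatOperator (stableDensity α) φ (u, z))
      (Set.Ioi 0) := by
    have h := integrableOn_stableKernel_mul_heatOperator hα0 hα2 hφ hφc
    rw [IntegrableOn, Measure.volume_eq_prod, ← Measure.prod_restrict, Measure.restrict_univ] at h
    exact h.integral_prod_left
  have hlim : Tendsto G atTop (𝓝 0) := by
    obtain ⟨T, -, hT⟩ := exists_forall_lt_notMem_tsupport hφc
    refine tendsto_const_nhds.congr' ?_
    filter_upwards [eventually_gt_atTop T] with u hu
    have hφ0 (w : V) : φ (u, w) = 0 := image_eq_zero_of_notMem_tsupport (hT u hu w)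
    simp [hG, hφ0]
  have hzero : G 0 = φ (0, 0) := by
    simp [hG, zero_rpow (inv_pos.2 hα0).ne', integral_mul_const,
      integral_stableKernel (V := V) hα0 hα2 one_pos]
  rw [integral_Ioi_of_hasDerivAt_of_tendsto hcont.continuousWithinAt hderiv hint hlim, hzero,
    zero_sub]

lemma stableKernel_sub_mul_heatOperator (k : V → ℝ) (φ : ℝ × V → ℝ) (s u : ℝ) (x z : V) :
    stableKernel α (u - s) (z - x) * heatOperator k φ (u, z) =
      stableKernel α (u - s) (z - x) *
        heatOperator k (fun q => φ (q + (s, x))) (u - s, z - x) := by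
  rw [heatOperator_comp_add_right, Prod.mk_add_mk, sub_add_cancel, sub_add_cancel]

theorem integrableOn_stableKernel_sub_mul_heatOperator (hα0 : 0 < α) (hα2 : α < 2)
    (hφ : ContDiff ℝ 2 φ) (hφc : HasCompactSupport φ) (s : ℝ) (x : V) :
    IntegrableOn (fun p : ℝ × V =>
      stableKernel α (p.1 - s) (p.2 - x) * heatOperator (stableDensity α) φ p)
      (Set.Ioi s ×ˢ Set.univ) := by
  have hpre : (fun p : ℝ × V => p - (s, x)) ⁻¹' (Set.Ioi 0 ×ˢ Set.univ) =
      Set.Ioi s ×ˢ Set.univ := by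
    ext p
    simp
  have htranslate := ((measurePreserving_sub_right (volume.prod volume)
    (s, x)).integrableOn_comp_preimage (measurableEmbedding_subRight (s, x))).2
    (integrableOn_stableKernel_mul_heatOperator hα0 hα2 (φ := fun q => φ (q + (s, x)))
      (hφ.comp (contDiff_id.add contDiff_const))
      (hφc.comp_homeomorph (Homeomorph.addRight (s, x))))
  rw [hpre] at htranslate
  exact htranslate.congr (ae_of_all _ fun p =>
    (stableKernel_sub_mul_heatOperator _ φ s p.1 x p.2).symm)

theorem integral_Ioi_stableKernel_sub_mul_heatOperator (hα0 : 0 < α) (hα2 : α < 2)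
    (hφ : ContDiff ℝ 2 φ) (hφc : HasCompactSupport φ) (s : ℝ) (x : V) :
    ∫ u in Set.Ioi s, ∫ z, stableKernel α (u - s) (z - x) * heatOperator (stableDensity α) φ (u, z)
      = -φ (s, x) := by
  have hpre : (fun u : ℝ => u - s) ⁻¹' Set.Ioi 0 = Set.Ioi s := by
    ext u
    simp
  have htranslate := integral_Ioi_stableKernel_mul_heatOperator hα0 hα2
    (φ := fun q => φ (q + (s, x))) (hφ.comp (contDiff_id.add contDiff_const))
    (hφc.comp_homeomorph (Homeomorph.addRight (s, x)))
  rw [← (measurePreserving_sub_right volume s).setIntegral_preimage_emb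
    (measurableEmbedding_subRight s), hpre, Prod.mk_add_mk, zero_add, zero_add] at htranslate
  rw [← htranslate]
  congr! 2 with u
  simp_rw [stableKernel_sub_mul_heatOperator]
  exact integral_sub_right_eq_self (fun z => stableKernel α (u - s) z *
    heatOperator (stableDensity α) (fun q => φ (q + (s, x))) (u - s, z)) x

lemma stableDensity_neg {V : Type*} [NormedAddCommGroup V] [InnerProductSpace ℝ V] (α : ℝ) (y : V) :
    stableDensity α (-y) = stableDensity α y := by
  simp only [stableDensity, norm_neg]

theorem deriv_add_eq_heatOperator (hα0 : 0 < α) (hα2 : α < 2) (hφ : ContDiff ℝ 2 φ)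
    (hφc : HasCompactSupport φ) {u : ℝ} {z : V} {l : ℝ}
    (hl : Tendsto (fun ε : ℝ => ∫ y in {y | ε < ‖y‖}, (φ (u, z + y) - φ (u, z)) * stableDensity α y)
      (𝓝[>] 0) (𝓝 l)) :
    deriv (fun v => φ (v, z)) u + l = heatOperator (stableDensity α) φ (u, z) := by
  obtain ⟨C, hC⟩ := hφc.exists_bound_of_continuous hφ.continuous
  obtain ⟨M, hM⟩ := exists_abs_secondDiff_slice_le hφ hφc
  have hφ0 := hφ.continuous
  have hlevy := tendsto_setIntegral_levyOperator (isLevyDensity_stableDensity hα0 hα2)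
    (stableDensity_neg α) (f := fun z => φ (u, z)) (Continuous.measurable (by fun_prop))
    (fun z => hC (u, z)) (hM u) z
  rw [heatOperator, (hasDerivAt_time (hφ.of_le one_le_two) u z).deriv,
    tendsto_nhds_unique hl hlevy]

theorem stmt_10_general (hα0 : 0 < α) (hα2 : α < 2) {ν : V → ℝ}
    (hν : ∀ y, y ≠ 0 → ν y = stableDensity α y) {p : ℝ → V → ℝ}
    (hp : ∀ t, 0 < t → ∀ x, p t x = stableKernel α t x)
    (hφ : ContDiff ℝ 2 φ) (hφc : HasCompactSupport φ) {Δφ : ℝ → V → ℝ}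
    (hΔφ : ∀ u z, Tendsto
      (fun ε : ℝ => ∫ y in {y | ε < ‖y‖}, (φ (u, z + y) - φ (u, z)) * ν y)
      (𝓝[>] 0) (𝓝 (Δφ u z))) (s : ℝ) (x : V) :
    IntegrableOn
        (fun uz : ℝ × V =>
          p (uz.1 - s) (uz.2 - x) * (deriv (fun v => φ (v, uz.2)) uz.1 + Δφ uz.1 uz.2))
        (Set.Ioi s ×ˢ Set.univ) ∧
      ∫ u in Set.Ioi s, ∫ z, p (u - s) (z - x) * (deriv (fun v => φ (v, z)) u + Δφ u z) =
        -φ (s, x) := by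
  have hheat (u : ℝ) (z : V) :
      deriv (fun v => φ (v, z)) u + Δφ u z = heatOperator (stableDensity α) φ (u, z) := by
    refine deriv_add_eq_heatOperator hα0 hα2 hφ hφc ((hΔφ u z).congr' ?_)
    filter_upwards [self_mem_nhdsWithin] with ε (hε : 0 < ε)
    refine setIntegral_congr_fun (measurableSet_lt measurable_const measurable_norm)
      fun y (hy : ε < ‖y‖) => ?_
    simp only [hν y (norm_pos_iff.1 (hε.trans hy))]
  simp only [hheat]
  constructor
  · refine (integrableOn_stableKernel_sub_mul_heatOperator hα0 hα2 hφ hφc s x).congr_fun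
      (fun uz huz => ?_) (measurableSet_Ioi.prod .univ)
    rw [hp _ (sub_pos.2 huz.1)]
  · rw [← integral_Ioi_stableKernel_sub_mul_heatOperator hα0 hα2 hφ hφc s x]
    refine setIntegral_congr_fun measurableSet_Ioi fun u hu => ?_
    simp only [hp _ (sub_pos.2 hu)]

end HeatEquation

end

/-- For smooth compactly supported `φ : ℝ × ℝ^d → ℝ`, every `s ∈ ℝ` and
`x ∈ ℝ^d`, `∫_s^∞ ∫_{ℝ^d} p_{u−s}(z−x) (∂_u φ(u,z) + Δ_z^{α/2}φ(u,z)) dz du = −φ(s,x)`,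
where `Δ_z^{α/2}φ(u,z)` is the principal-value fractional Laplacian in the space variable,
and the iterated integral converges absolutely. -/
theorem stmt_10 (d : ℕ) (hd : 1 ≤ d) (α : ℝ) (hα0 : 0 < α) (hα2 : α < 2)
    (ν : EuclideanSpace ℝ (Fin d) → ℝ)
    (hν : ∀ y : EuclideanSpace ℝ (Fin d), y ≠ 0 →
      ν y = (2 : ℝ) ^ α * Real.Gamma (((d : ℝ) + α) / 2) /
        (Real.pi ^ ((d : ℝ) / 2) * |Real.Gamma (-α / 2)|) * ‖y‖ ^ (-((d : ℝ) + α)))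
    (p : ℝ → EuclideanSpace ℝ (Fin d) → ℝ)
    (hp : ∀ t : ℝ, 0 < t → ∀ x : EuclideanSpace ℝ (Fin d),
      p t x = (2 * Real.pi) ^ (-(d : ℝ)) *
        ∫ ξ : EuclideanSpace ℝ (Fin d), Real.exp (-(t * ‖ξ‖ ^ α)) * Real.cos ⟪x, ξ⟫)
    (φ : ℝ × EuclideanSpace ℝ (Fin d) → ℝ)
    (hφ : ContDiff ℝ (⊤ : ℕ∞) φ) (hφc : HasCompactSupport φ)
    (Δφ : ℝ → EuclideanSpace ℝ (Fin d) → ℝ)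
    (hΔφ : ∀ (u : ℝ) (z : EuclideanSpace ℝ (Fin d)),
      Tendsto
        (fun ε : ℝ => ∫ y in {y : EuclideanSpace ℝ (Fin d) | ε < ‖y‖},
          (φ (u, z + y) - φ (u, z)) * ν y)
        (𝓝[>] (0 : ℝ)) (𝓝 (Δφ u z))) :
    ∀ (s : ℝ) (x : EuclideanSpace ℝ (Fin d)),
      IntegrableOn
        (fun uz : ℝ × EuclideanSpace ℝ (Fin d) =>
          p (uz.1 - s) (uz.2 - x) * (deriv (fun v : ℝ => φ (v, uz.2)) uz.1 + Δφ uz.1 uz.2))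
        (Set.Ioi s ×ˢ (Set.univ : Set (EuclideanSpace ℝ (Fin d)))) ∧
      ∫ u in Set.Ioi s, ∫ z : EuclideanSpace ℝ (Fin d),
          p (u - s) (z - x) * (deriv (fun v : ℝ => φ (v, z)) u + Δφ u z)
        = -φ (s, x) := by
  refine stmt_10_general hα0 hα2 ?_ ?_ (contDiff_infty.1 hφ 2) hφc hΔφ
  · simpa only [stableDensity, finrank_euclideanSpace_fin] using hν
  · simpa only [stableKernel, cosTransform, finrank_euclideanSpace_fin] using hp
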